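/- Quantitative Schur-concavity in dimension k ≥ 2: Fix k ≥ 2, a demand-to-supply ratio β > 0, and M ≥ max{1, 1/β}, with supply and demand locations i.i.d. uniform on [0,1]^k and m = βn. There exist positive constants N and α depending only on (k, β, M), and B and w depending only on (k, M), such that for any θ > 0 and any service-range vectors r, r' ∈ [0, M]^n with r ⪰ r' and ‖r^↓ − r'^↓‖₁ > θn, and all n ≥ N: μ_m(r') − μ_m(r) > α·θ⁴·n − B·(min{α·θ⁴/3, w})^{−k}. -/

import Mathlib

open MeasureTheory
open scoped Classical

noncomputable section

/-- A matching of a bipartite compatibility relation, given as a finite set of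
supply-demand pairs with compatible endpoints and pairwise distinct coordinates. -/
def IsBipMatching {a b : ℕ} (adj : Fin a → Fin b → Prop) (M : Finset (Fin a × Fin b)) : Prop :=
  (∀ e ∈ M, adj e.1 e.2) ∧
    ∀ e ∈ M, ∀ e' ∈ M, e ≠ e' → e.1 ≠ e'.1 ∧ e.2 ≠ e'.2

/-- The maximum cardinality of a matching of the bipartite compatibility relation. -/
def matchingNumber {a b : ℕ} (adj : Fin a → Fin b → Prop) : ℕ :=
  sSup {c | ∃ M : Finset (Fin a × Fin b), IsBipMatching adj M ∧ M.card = c}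

/-- The uniform measure on the unit cube `[0,1]^k`. -/
def unifCube (k : ℕ) : Measure (EuclideanSpace ℝ (Fin k)) :=
  volume.restrict {x | ∀ i, x i ∈ Set.Icc (0 : ℝ) 1}

/-- Compatibility: supply node `i` can serve demand node `j` iff the demand location is
within distance `(r i / n)^(1/k)` of the supply location. -/
def adjOf (k ntot : ℕ) {a b : ℕ} (S : Fin a → EuclideanSpace ℝ (Fin k)) (r : Fin a → ℝ)
    (D : Fin b → EuclideanSpace ℝ (Fin k)) (i : Fin a) (j : Fin b) : Prop :=
  dist (S i) (D j) ≤ (r i / (ntot : ℝ)) ^ ((1 : ℝ) / (k : ℝ))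

/-- Expected maximum matching size, with supply and demand locations i.i.d. uniform
on the unit cube `[0,1]^k`. -/
def muU (k ntot m : ℕ) {a : ℕ} (r : Fin a → ℝ) : ℝ :=
  ∫ S : Fin a → EuclideanSpace ℝ (Fin k),
    ∫ D : Fin m → EuclideanSpace ℝ (Fin k),
      (matchingNumber (fun i j => adjOf k ntot S r D i j) : ℝ)
        ∂(Measure.pi fun _ => unifCube k) ∂(Measure.pi fun _ => unifCube k)

/-- The non-increasing rearrangement of a finite real vector. -/
def descSort {n : ℕ} (x : Fin n → ℝ) : Fin n → ℝ :=
  x ∘ Tuple.sort (fun i => -x i)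

/-- `x` majorizes `y`. -/
def Majorizes {n : ℕ} (x y : Fin n → ℝ) : Prop :=
  (∀ ℓ : ℕ,
      ∑ i ∈ Finset.univ.filter (fun i : Fin n => (i : ℕ) < ℓ), descSort y i ≤
        ∑ i ∈ Finset.univ.filter (fun i : Fin n => (i : ℕ) < ℓ), descSort x i) ∧
    ∑ i, x i = ∑ i, y i

lemma mn_bdd {a b : ℕ} (adj : Fin a → Fin b → Prop) :
    BddAbove {c | ∃ M : Finset (Fin a × Fin b), IsBipMatching adj M ∧ M.card = c} := by
  refine ⟨Fintype.card (Fin a × Fin b), ?_⟩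
  rintro c ⟨M, -, rfl⟩
  exact Finset.card_le_univ M

lemma mn_ge {a b : ℕ} {adj : Fin a → Fin b → Prop} {M : Finset (Fin a × Fin b)}
    (h : IsBipMatching adj M) : M.card ≤ matchingNumber adj :=
  le_csSup (mn_bdd adj) ⟨M, h, rfl⟩

lemma mn_exists {a b : ℕ} (adj : Fin a → Fin b → Prop) :
    ∃ M : Finset (Fin a × Fin b), IsBipMatching adj M ∧ M.card = matchingNumber adj := by
  have := Nat.sSup_mem (s := {c | ∃ M : Finset (Fin a × Fin b), IsBipMatching adj M ∧ M.card = c})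
    ⟨0, ∅, by simp [IsBipMatching], by simp⟩ (mn_bdd adj)
  exact this

/-- the relation with row `i` removed -/
def rowDel {a b : ℕ} (adj : Fin a → Fin b → Prop) (i : Fin a) : Fin a → Fin b → Prop :=
  fun i' j => i' ≠ i ∧ adj i' j

/-- demand `j` is missed by some maximum matching -/
def IsFree {a b : ℕ} (adj : Fin a → Fin b → Prop) (j : Fin b) : Prop :=
  ∃ M : Finset (Fin a × Fin b), IsBipMatching adj M ∧ M.card = matchingNumber adj ∧
    ∀ e ∈ M, e.2 ≠ j

lemma isFree_of_isolated {a b : ℕ} {adj : Fin a → Fin b → Prop} {j : Fin b}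
    (h : ∀ i, ¬ adj i j) : IsFree adj j := by
  obtain ⟨M, hM, hc⟩ := mn_exists adj
  refine ⟨M, hM, hc, ?_⟩
  rintro e he rfl
  exact h _ (hM.1 e he)

lemma mn_le_of_bad {a b : ℕ} {adj adj' : Fin a → Fin b → Prop} (s : Finset (Fin a))
    (h : ∀ i ∉ s, ∀ j, adj i j → adj' i j) :
    matchingNumber adj ≤ matchingNumber adj' + s.card := by
  obtain ⟨M, hM, hc⟩ := mn_exists adj
  have h1 : IsBipMatching adj' (M.filter (fun e => e.1 ∉ s)) := by
    refine ⟨?_, ?_⟩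
    · intro e he
      rw [Finset.mem_filter] at he
      exact h _ he.2 _ (hM.1 e he.1)
    · intro e he e' he'
      rw [Finset.mem_filter] at he he'
      exact hM.2 e he.1 e' he'.1
  have h2 : (M.filter (fun e => ¬ e.1 ∉ s)).card ≤ s.card := by
    apply Finset.card_le_card_of_injOn Prod.fst
    · intro e he
      simpa using (Finset.mem_filter.1 he).2
    · intro e he e' he' hee
      by_contra hne
      exact (hM.2 e (Finset.mem_filter.1 he).1 e' (Finset.mem_filter.1 he').1 hne).1 hee
  have h3 := Finset.card_filter_add_card_filter_not (s := M) (fun e => e.1 ∉ s)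
  have := mn_ge h1
  omega

lemma mn_mono {a b : ℕ} {adj adj' : Fin a → Fin b → Prop}
    (h : ∀ i j, adj i j → adj' i j) : matchingNumber adj ≤ matchingNumber adj' := by
  simpa using mn_le_of_bad (adj := adj) (adj' := adj') ∅ (fun i _ j => h i j)

lemma mn_perm_le {a b : ℕ} (adj : Fin a → Fin b → Prop) (π : Equiv.Perm (Fin a)) :
    matchingNumber (fun i j => adj (π i) j) ≤ matchingNumber adj := by
  obtain ⟨M, hM, hc⟩ := mn_exists (fun i j => adj (π i) j)
  rw [← hc]
  have hinj : Function.Injective (fun e : Fin a × Fin b => (π e.1, e.2)) := by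
    rintro ⟨x, y⟩ ⟨x', y'⟩ h
    simpa using h
  rw [← Finset.card_image_of_injective M hinj]
  apply mn_ge
  refine ⟨?_, ?_⟩
  · intro e he
    obtain ⟨f, hf, rfl⟩ := Finset.mem_image.1 he
    exact hM.1 f hf
  · intro e he e' he' hne
    obtain ⟨f, hf, rfl⟩ := Finset.mem_image.1 he
    obtain ⟨f', hf', rfl⟩ := Finset.mem_image.1 he'
    have : f ≠ f' := by rintro rfl; exact hne rfl
    have := hM.2 f hf f' hf' this
    simpa using this

lemma mn_perm {a b : ℕ} (adj : Fin a → Fin b → Prop) (π : Equiv.Perm (Fin a)) :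
    matchingNumber (fun i j => adj (π i) j) = matchingNumber adj := by
  apply le_antisymm (mn_perm_le adj π)
  have := mn_perm_le (fun i j => adj (π i) j) π.symm
  simpa using this

lemma mn_decomp {a b : ℕ} (adj : Fin a → Fin b → Prop) (i : Fin a) :
    matchingNumber adj = matchingNumber (rowDel adj i) +
      if ∃ j, IsFree (rowDel adj i) j ∧ adj i j then 1 else 0 := by
  have hle : matchingNumber adj ≤ matchingNumber (rowDel adj i) + 1 := by
    have := mn_le_of_bad (adj := adj) (adj' := rowDel adj i) {i}
      (fun i' hi' j h => ⟨by simpa using hi', h⟩)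
    simpa using this
  have hge : matchingNumber (rowDel adj i) ≤ matchingNumber adj := mn_mono (fun i j h => h.2)
  split_ifs with h
  · apply le_antisymm hle
    obtain ⟨j, ⟨M, hM, hc, hj⟩, hij⟩ := h
    rw [← hc]
    have hi : ∀ e ∈ M, e.1 ≠ i := fun e he => (hM.1 e he).1
    have hnot : (i, j) ∉ M := fun h => hi _ h rfl
    rw [← Finset.card_insert_of_notMem hnot]
    apply mn_ge
    refine ⟨?_, ?_⟩
    · intro e he
      rcases Finset.mem_insert.1 he with rfl | he
      · exact hij
      · exact (hM.1 e he).2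
    · intro e he e' he' hne
      rcases Finset.mem_insert.1 he with rfl | he <;> rcases Finset.mem_insert.1 he' with rfl | he'
      · exact absurd rfl hne
      · exact ⟨(hi e' he').symm, (hj e' he').symm⟩
      · exact ⟨hi e he, hj e he⟩
      · exact hM.2 e he e' he' hne
  · apply le_antisymm _ (by simpa using hge)
    by_contra hcon
    have heq : matchingNumber adj = matchingNumber (rowDel adj i) + 1 := by omega
    obtain ⟨M, hM, hc⟩ := mn_exists adj
    by_cases hi : ∃ e ∈ M, e.1 = i
    · obtain ⟨e, he, rfl⟩ := hi
      apply h
      refine ⟨e.2, ⟨M.erase e, ⟨?_, ?_⟩, ?_, ?_⟩, hM.1 e he⟩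
      · intro f hf
        have hf' := Finset.mem_erase.1 hf
        exact ⟨(hM.2 f hf'.2 e he hf'.1).1, hM.1 f hf'.2⟩
      · intro f hf f' hf'
        exact hM.2 f (Finset.mem_of_mem_erase hf) f' (Finset.mem_of_mem_erase hf')
      · rw [Finset.card_erase_of_mem he]; omega
      · intro f hf
        have hf' := Finset.mem_erase.1 hf
        exact (hM.2 f hf'.2 e he hf'.1).2
    · push Not at hi
      have : IsBipMatching (rowDel adj i) M := ⟨fun e he => ⟨hi e he, hM.1 e he⟩, hM.2⟩
      have := mn_ge this
      omega

/-- Euclidean space -/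
abbrev EE (k : ℕ) := EuclideanSpace ℝ (Fin k)

/-- the unit cube -/
def QQ (k : ℕ) : Set (EE k) := {x | ∀ i, x i ∈ Set.Icc (0 : ℝ) 1}

lemma box_volume (k : ℕ) (p q : ℝ) :
    volume {x : EE k | ∀ i, x i ∈ Set.Icc p q} = ENNReal.ofReal (q - p) ^ k := by
  have h := (PiLp.volume_preserving_toLp (Fin k)).measure_preimage
    (s := {x : EE k | ∀ i, x i ∈ Set.Icc p q}) (by
      apply MeasurableSet.nullMeasurableSet
      rw [Set.ofPred_forall]
      refine MeasurableSet.iInter fun i => ?_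
      exact measurableSet_Icc.preimage (by fun_prop))
  rw [← h]
  have : (WithLp.toLp 2 : (Fin k → ℝ) → EE k) ⁻¹' {x : EE k | ∀ i, x i ∈ Set.Icc p q}
      = Set.Icc (fun _ => p) (fun _ => q) := by
    ext x
    simp only [Set.mem_preimage, Set.mem_ofPred_eq, Set.mem_Icc, Pi.le_def]
    constructor
    · intro h; exact ⟨fun i => (h i).1, fun i => (h i).2⟩
    · intro h i; exact ⟨h.1 i, h.2 i⟩
  rw [this, Real.volume_Icc_pi]
  simp

lemma box_meas (k : ℕ) (p q : ℝ) : MeasurableSet {x : EE k | ∀ i, x i ∈ Set.Icc p q} := by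
  rw [Set.ofPred_forall]
  refine MeasurableSet.iInter fun i => ?_
  exact measurableSet_Icc.preimage (by fun_prop)

lemma QQ_meas (k : ℕ) : MeasurableSet (QQ k) := box_meas k 0 1

lemma unifCube_eq (k : ℕ) : unifCube k = volume.restrict (QQ k) := rfl

instance unifCube_prob (k : ℕ) : IsProbabilityMeasure (unifCube k) := by
  constructor
  rw [unifCube_eq, Measure.restrict_apply_univ, QQ, box_volume]
  simp

/-- joint law of locations -/
def PP (k n m : ℕ) : Measure ((Fin n → EE k) × (Fin m → EE k)) :=
  (Measure.pi fun _ => unifCube k).prod (Measure.pi fun _ => unifCube k)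

instance PP_prob (k n m : ℕ) : IsProbabilityMeasure (PP k n m) := by
  unfold PP; infer_instance

lemma mp_update {ι X : Type*} [Fintype ι] [MeasurableSpace X] (μ : Measure X)
    [IsProbabilityMeasure μ] (i : ι) :
    MeasurePreserving (fun p : (ι → X) × X => Function.update p.1 i p.2)
      ((Measure.pi fun _ : ι => μ).prod μ) (Measure.pi fun _ : ι => μ) := by
  have hm : Measurable (fun p : (ι → X) × X => Function.update p.1 i p.2) := by
    rw [measurable_pi_iff]
    intro j
    by_cases h : j = i
    · subst h; simpa using measurable_snd
    · simp only [Function.update_of_ne h]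
      exact (measurable_pi_apply j).comp measurable_fst
  refine ⟨hm, ?_⟩
  symm
  refine Measure.pi_eq fun s hs => ?_
  rw [Measure.map_apply hm (MeasurableSet.univ_pi hs)]
  have : (fun p : (ι → X) × X => Function.update p.1 i p.2) ⁻¹' (Set.pi Set.univ s)
      = (Set.pi Set.univ (Function.update s i Set.univ)) ×ˢ (s i) := by
    ext ⟨f, x⟩
    simp only [Set.mem_preimage, Set.mem_pi, Set.mem_univ, true_implies, Set.mem_prod]
    constructor
    · intro h
      refine ⟨fun j => ?_, by simpa using h i⟩
      by_cases hj : j = i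
      · subst hj; simp
      · simpa [Function.update_of_ne hj] using h j
    · rintro ⟨h1, h2⟩ j
      by_cases hj : j = i
      · subst hj; simpa using h2
      · simpa [Function.update_of_ne hj] using h1 j
  rw [this, Measure.prod_prod, Measure.pi_pi]
  rw [← Finset.mul_prod_erase Finset.univ (fun j => μ (s j)) (Finset.mem_univ i),
    ← Finset.mul_prod_erase Finset.univ (fun j => μ (Function.update s i Set.univ j))
      (Finset.mem_univ i)]
  simp only [Function.update_self, measure_univ, one_mul]
  rw [mul_comm]
  congr 1
  apply Finset.prod_congr rfl
  intro j hj
  rw [Function.update_of_ne (Finset.ne_of_mem_erase hj)]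

lemma mp_perm {ι X : Type*} [Fintype ι] [MeasurableSpace X] (μ : Measure X)
    [IsProbabilityMeasure μ] (π : Equiv.Perm ι) :
    MeasurePreserving (fun f : ι → X => fun i => f (π i))
      (Measure.pi fun _ : ι => μ) (Measure.pi fun _ : ι => μ) := by
  have hm : Measurable (fun f : ι → X => fun i => f (π i)) := by
    rw [measurable_pi_iff]; intro j; exact measurable_pi_apply _
  refine ⟨hm, ?_⟩
  symm
  refine Measure.pi_eq fun s hs => ?_
  rw [Measure.map_apply hm (MeasurableSet.univ_pi hs)]
  have : (fun f : ι → X => fun i => f (π i)) ⁻¹' (Set.pi Set.univ s)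
      = (Set.pi Set.univ (fun i => s (π.symm i))) := by
    ext f
    simp only [Set.mem_preimage, Set.mem_pi, Set.mem_univ, true_implies]
    constructor
    · intro h j; simpa using h (π.symm j)
    · intro h j; simpa using h (π j)
  rw [this, Measure.pi_pi]
  exact Equiv.prod_comp π.symm (fun i => μ (s i))

/-- The relation as a function of locations. -/
def REL (k N : ℕ) {n m : ℕ} (r : Fin n → ℝ) (ω : (Fin n → EE k) × (Fin m → EE k)) :
    Fin n → Fin m → Prop := fun i j => adjOf k N ω.1 r ω.2 i j

lemma REL_meas (k N : ℕ) {n m : ℕ} (r : Fin n → ℝ) :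
    Measurable (REL k N r : (Fin n → EE k) × (Fin m → EE k) → _) := by
  rw [measurable_pi_iff]; intro i
  rw [measurable_pi_iff]; intro j
  apply measurableSet_setOfPred.1
  unfold REL adjOf
  apply measurableSet_le
  · fun_prop
  · fun_prop

lemma REL_comp_meas {β : Type*} [MeasurableSpace β] (k N : ℕ) {n m : ℕ} (r : Fin n → ℝ)
    (f : (Fin n → Fin m → Prop) → β) :
    Measurable (fun ω : (Fin n → EE k) × (Fin m → EE k) => f (REL k N r ω)) :=
  (measurable_of_countable f).comp (REL_meas k N r)

lemma REL_comp_int (k N : ℕ) {n m : ℕ} (r : Fin n → ℝ)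
    (f : (Fin n → Fin m → Prop) → ℝ) :
    Integrable (fun ω : (Fin n → EE k) × (Fin m → EE k) => f (REL k N r ω)) (PP k n m) := by
  obtain ⟨C, hC⟩ := (Set.finite_range (fun x => ‖f x‖)).bddAbove
  refine Integrable.of_bound (REL_comp_meas k N r f).aestronglyMeasurable C ?_
  filter_upwards with ω
  exact hC ⟨_, rfl⟩

lemma muU_eq (k N : ℕ) {n m : ℕ} (r : Fin n → ℝ) :
    muU k N m r = ∫ ω, (matchingNumber (REL k N r ω) : ℝ) ∂(PP k n m) := by
  unfold muU PP
  rw [integral_prod]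
  · rfl
  · exact REL_comp_int k N r (fun A => (matchingNumber A : ℝ))

lemma muU_perm (k N m : ℕ) {n : ℕ} (r : Fin n → ℝ) (π : Equiv.Perm (Fin n)) :
    muU k N m (r ∘ π) = muU k N m r := by
  rw [muU_eq, muU_eq]
  have h : MeasurePreserving (Prod.map (fun f : Fin n → EE k => fun i => f (π i)) id)
      (PP k n m) (PP k n m) := (mp_perm (unifCube k) π).prod (MeasurePreserving.id _)
  have h2 := h.map_eq
  conv_lhs => rw [← h2]
  rw [integral_map_of_stronglyMeasurable h.measurable
    (REL_comp_meas k N (r ∘ π) (fun A => (matchingNumber A : ℝ))).stronglyMeasurable]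
  apply integral_congr_ae
  filter_upwards with ω
  have := mn_perm (REL k N r ω) π
  rw [← this]
  rfl

lemma muU_le_of_bad (k N m : ℕ) {n : ℕ} (hN : 0 < N) (r r' : Fin n → ℝ) (h0 : ∀ i, 0 ≤ r i)
    (s : Finset (Fin n)) (h : ∀ i ∉ s, r i ≤ r' i) :
    muU k N m r ≤ muU k N m r' + s.card := by
  rw [muU_eq, muU_eq]
  have h1 : ∫ ω, ((matchingNumber (REL k N r' ω) : ℝ) + s.card) ∂(PP k n m)
     = ∫ ω, (matchingNumber (REL k N r' ω) : ℝ) ∂(PP k n m) + s.card := by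
    rw [integral_add (REL_comp_int k N r' (fun A => (matchingNumber A : ℝ))) (integrable_const _)]
    simp
  rw [← h1]
  apply integral_mono (REL_comp_int k N r (fun A => (matchingNumber A : ℝ)))
    (REL_comp_int k N r' (fun A => (matchingNumber A : ℝ) + s.card))
  intro ω
  have := mn_le_of_bad (adj := REL k N r ω) (adj' := REL k N r' ω) s (by
    intro i hi j hij
    refine le_trans hij ?_
    apply Real.rpow_le_rpow
    · exact div_nonneg (h0 i) (by positivity)
    · have := h i hi; gcongr
    · positivity)
  have h3 : (matchingNumber (REL k N r ω) : ℝ) ≤ matchingNumber (REL k N r' ω) + s.card := by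
    exact_mod_cast this
  exact h3

lemma sum_update {ι X : Type*} [Fintype ι] [Fintype X] [DecidableEq ι] [DecidableEq X]
    (f : (ι → X) → ℝ) (i : ι) :
    ∑ σ : ι → X, ∑ x : X, f (Function.update σ i x) = Fintype.card X * ∑ σ, f σ := by
  rw [← Fintype.sum_prod_type']
  have : ∑ p : (ι → X) × X, f (Function.update p.1 i p.2) = ∑ p : (ι → X) × X, f p.1 := by
    refine Finset.sum_nbij' (fun p => (Function.update p.1 i p.2, p.1 i))
      (fun p => (Function.update p.1 i p.2, p.1 i)) ?_ ?_ ?_ ?_ ?_ <;> simp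
  rw [this, Fintype.sum_prod_type]
  simp [Finset.mul_sum]

lemma abel_le : ∀ (n : ℕ) (d g : Fin n → ℝ), Monotone g →
    (∀ ℓ : ℕ, 0 ≤ ∑ i : Fin n, if (i : ℕ) < ℓ then d i else 0) →
    ∀ u, (∀ i, g i ≤ u) → ∑ i, g i * d i ≤ u * ∑ i, d i := by
  intro n
  induction n with
  | zero => intro d g _ _ u _; simp
  | succ n ih =>
    intro d g hg hd u hu
    have h1 := ih (fun i => d i.castSucc) (fun i => g i.castSucc)
      (fun a b hab => hg (by simpa using hab)) (by
        intro ℓ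
        have := hd (min ℓ n)
        rw [Fin.sum_univ_castSucc] at this
        simp only [Fin.val_castSucc, Fin.val_last] at this
        convert this using 1
        have : ¬ n < min ℓ n := by omega
        rw [if_neg this, add_zero]
        apply Finset.sum_congr rfl
        intro i _
        have : (i : ℕ) < min ℓ n ↔ (i : ℕ) < ℓ := by have := i.2; omega
        simp only [this]) (g (Fin.last n)) (fun i => hg (Fin.le_last _))
    have h2 := hd (n + 1)
    have h3 : (∑ i : Fin (n+1), if (i : ℕ) < n + 1 then d i else 0) = ∑ i, d i := by
      apply Finset.sum_congr rfl
      intro i _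
      rw [if_pos i.2]
    rw [h3] at h2
    have h4 : g (Fin.last n) * ∑ i, d i ≤ u * ∑ i, d i :=
      mul_le_mul_of_nonneg_right (hu _) h2
    rw [Fin.sum_univ_castSucc] at h4 ⊢
    rw [Fin.sum_univ_castSucc (f := d)]
    linarith

/-- quantitative Karamata -/
lemma karamata {n : ℕ} (M c θ : ℝ) (hc : 0 ≤ c) (hθ : 0 ≤ θ) (x y : Fin n → ℝ)
    (hx : ∀ i, x i ∈ Set.Icc 0 M) (hy : ∀ i, y i ∈ Set.Icc 0 M)
    (hya : Antitone y)
    (hmaj : ∀ ℓ : ℕ,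
      ∑ i ∈ Finset.univ.filter (fun i : Fin n => (i : ℕ) < ℓ), y i ≤
        ∑ i ∈ Finset.univ.filter (fun i : Fin n => (i : ℕ) < ℓ), x i)
    (hsum : ∑ i, x i = ∑ i, y i)
    (hd : θ * n ≤ ∑ i, |x i - y i|)
    (f ψ : ℝ → ℝ) (hψ : AntitoneOn ψ (Set.Icc 0 M))
    (hf : ∀ u ∈ Set.Icc 0 M, ∀ v ∈ Set.Icc 0 M, f u - f v ≤ ψ v * (u - v) - c * (u - v)^2) :
    c * θ^2 * n ≤ ∑ i, (f (y i) - f (x i)) := by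
  rcases Nat.eq_zero_or_pos n with hn | hn
  · subst hn; simp
  have h1 : ∑ i, ψ (y i) * (x i - y i) ≤ 0 := by
    have := abel_le n (fun i => x i - y i) (fun i => ψ (y i))
      (fun a b hab => hψ (hy b) (hy a) (hya hab)) (by
        intro ℓ
        have := hmaj ℓ
        rw [← Finset.sum_filter, Finset.sum_sub_distrib]
        linarith) (ψ (y ⟨n-1, by omega⟩)) (by
          intro i
          refine hψ (hy _) (hy _) (hya ?_)
          rw [Fin.le_def]; have := i.2; simp only; omega)
    rw [Finset.sum_sub_distrib, hsum] at this
    simpa using this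
  have h2 : ∑ i, (f (x i) - f (y i)) ≤ ∑ i, (ψ (y i) * (x i - y i) - c * (x i - y i)^2) :=
    Finset.sum_le_sum fun i _ => hf _ (hx i) _ (hy i)
  rw [Finset.sum_sub_distrib (fun i => ψ (y i) * (x i - y i)), ← Finset.mul_sum] at h2
  have h3 : (∑ i, |x i - y i|)^2 ≤ n * ∑ i, (x i - y i)^2 := by
    have := sq_sum_le_card_mul_sum_sq (s := Finset.univ) (f := fun i => |x i - y i|)
    simpa [sq_abs] using this
  have hn' : (0 : ℝ) < n := by exact_mod_cast hn
  have h4 : (θ * n)^2 ≤ n * ∑ i, (x i - y i)^2 :=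
    le_trans (pow_le_pow_left₀ (by positivity) hd 2) h3
  have h5 : θ^2 * n ≤ ∑ i, (x i - y i)^2 := by
    have : n * (θ^2 * n) ≤ n * ∑ i, (x i - y i)^2 := by nlinarith
    exact le_of_mul_le_mul_left this hn'
  have h6 : c * (θ^2 * n) ≤ c * ∑ i, (x i - y i)^2 := mul_le_mul_of_nonneg_left h5 hc
  have h7 : ∑ i, (f (y i) - f (x i)) = - ∑ i, (f (x i) - f (y i)) := by
    rw [← Finset.sum_neg_distrib]; congr 1; ext i; ring
  rw [h7]
  linarith

/-- interpolation -/
lemma interp {n : ℕ} (M δ : ℝ) (μ : (Fin n → ℝ) → ℝ) (x y : Fin n → ℝ)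
    (hx : ∀ i, x i ∈ Set.Icc 0 M) (hy : ∀ i, y i ∈ Set.Icc 0 M)
    (h : ∀ a : Fin n → ℝ, (∀ i, a i ∈ Set.Icc 0 M) → ∀ i,
      δ * n ≤ ∑ j, (μ (Function.update a i (y j)) - μ (Function.update a i (x j)))) :
    δ * n * (n : ℝ)^n ≤ ∑ σ : Fin n → Fin n, μ (y ∘ σ) - ∑ σ : Fin n → Fin n, μ (x ∘ σ) := by
  let A : ℕ → (Fin n → Fin n) → Fin n → ℝ := fun t σ i => if (i : ℕ) < t then y (σ i) else x (σ i)
  have key : ∀ t : ℕ, t ≤ n →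
      δ * t * (n : ℝ)^n ≤ ∑ σ : Fin n → Fin n, μ (A t σ) - ∑ σ : Fin n → Fin n, μ (A 0 σ) := by
    intro t
    induction t with
    | zero => intro _; simp
    | succ t ih =>
      intro ht
      have ih := ih (by omega)
      have hn : (0 : ℝ) < n := by exact_mod_cast (by omega : 0 < n)
      let i : Fin n := ⟨t, by omega⟩
      have e1 := sum_update (fun σ => μ (A (t+1) σ)) i
      have e2 := sum_update (fun σ => μ (A t σ)) i
      have u1 : ∀ σ x', A (t+1) (Function.update σ i x') = Function.update (A t σ) i (y x') := by
        intro σ x'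
        ext j
        by_cases hj : j = i
        · subst hj; simp [A, i]
        · have : (j : ℕ) ≠ t := fun h => hj (Fin.ext h)
          have h2 : (j : ℕ) < t + 1 ↔ (j : ℕ) < t := by omega
          simp [A, Function.update_of_ne hj, h2]
      have u2 : ∀ σ x', A t (Function.update σ i x') = Function.update (A t σ) i (x x') := by
        intro σ x'
        ext j
        by_cases hj : j = i
        · subst hj; simp [A, i]
        · simp [A, Function.update_of_ne hj]
      simp only [u1] at e1
      simp only [u2] at e2
      have h3 : ∑ σ : Fin n → Fin n, (δ * n) ≤ ∑ σ : Fin n → Fin n,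
          ∑ j, (μ (Function.update (A t σ) i (y j)) - μ (Function.update (A t σ) i (x j))) := by
        refine Finset.sum_le_sum fun σ _ => h _ ?_ i
        intro j
        simp only [A]
        split_ifs
        · exact hy _
        · exact hx _
      simp only [Finset.sum_sub_distrib] at h3
      rw [e1, e2] at h3
      simp only [Finset.sum_const, Finset.card_univ, Fintype.card_fun, Fintype.card_fin,
        nsmul_eq_mul, Nat.cast_pow] at h3
      have h4 : δ * (n:ℝ)^n ≤ ∑ σ : Fin n → Fin n, μ (A (t+1) σ) - ∑ σ : Fin n → Fin n, μ (A t σ) := by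
        have : n * (δ * (n:ℝ)^n) ≤
          n * (∑ σ : Fin n → Fin n, μ (A (t+1) σ) - ∑ σ : Fin n → Fin n, μ (A t σ)) := by linarith
        exact le_of_mul_le_mul_left this hn
      push_cast
      linarith
  have := key n le_rfl
  have a1 : ∀ σ, A n σ = y ∘ σ := by intro σ; ext i; simp [A]
  have a0 : ∀ σ, A 0 σ = x ∘ σ := by intro σ; ext i; simp [A]
  simpa [a1, a0] using this

lemma muU_shift (k N m : ℕ) {n : ℕ} (hN : 0 < N) (a b : Fin n → ℝ) (ha : ∀ i, 0 ≤ a i) (D : ℕ)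
    (h : ∀ i j : Fin n, (j : ℕ) = i + D → a j ≤ b i) :
    muU k N m a ≤ muU k N m b + D := by
  by_cases hD : n ≤ D
  · have := muU_le_of_bad k N m hN a b ha Finset.univ (by simp)
    have h2 : (n : ℝ) ≤ D := by exact_mod_cast hD
    simp only [Finset.card_univ, Fintype.card_fin] at this
    linarith
  · have hn : 0 < n := by omega
    have : NeZero n := ⟨by omega⟩
    let π : Equiv.Perm (Fin n) := Equiv.addRight (⟨D, by omega⟩ : Fin n)
    rw [← muU_perm k N m a π]
    let s : Finset (Fin n) := Finset.univ.filter (fun i => n ≤ (i : ℕ) + D)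
    have hs : s.card ≤ D := by
      calc s.card ≤ (Finset.range D).card := by
            apply Finset.card_le_card_of_injOn (fun i : Fin n => (i : ℕ) - (n - D))
            · intro i hi
              have := (Finset.mem_filter.1 hi).2
              have := i.2
              simp only [Finset.coe_range, Set.mem_Iio]; omega
            · intro i hi j hj hij
              have h1 := (Finset.mem_filter.1 hi).2
              have h2 := (Finset.mem_filter.1 hj).2
              simp only at hij
              apply Fin.ext; omega
        _ = D := by simp
    have := muU_le_of_bad k N m hN (a ∘ π) b (fun i => ha _) s (by
      intro i hi
      have hi' : (i : ℕ) + D < n := by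
        by_contra hc
        exact hi (Finset.mem_filter.2 ⟨Finset.mem_univ _, by omega⟩)
      apply h
      change ((i + (⟨D, by omega⟩ : Fin n) : Fin n) : ℕ) = i + D
      rw [Fin.val_add, Nat.mod_eq_of_lt hi'])
    have h2 : (s.card : ℝ) ≤ D := by exact_mod_cast hs
    linarith

/-- number of samples below `ℓ` -/
def cnt {n : ℕ} (σ : Fin n → Fin n) (ℓ : ℕ) : ℕ :=
  (Finset.univ.filter (fun i => (σ i : ℕ) < ℓ)).card

lemma cnt_perm {n : ℕ} (σ : Fin n → Fin n) (π : Equiv.Perm (Fin n)) (ℓ : ℕ) :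
    cnt (σ ∘ π) ℓ = cnt σ ℓ := by
  unfold cnt
  apply Finset.card_bij (fun i _ => π i)
  · intro i hi; simpa using hi
  · intro i _ j _ h; exact π.injective h
  · intro j hj; exact ⟨π.symm j, by simpa using hj, by simp⟩

lemma cmp_up (k N m : ℕ) {n : ℕ} (hN : 0 < N) (r : Fin n → ℝ) (hr : Antitone r)
    (h0 : ∀ i, 0 ≤ r i) (σ : Fin n → Fin n) (D : ℕ) (h : ∀ ℓ ≤ n, cnt σ ℓ ≤ ℓ + D) :
    muU k N m (r ∘ σ) ≤ muU k N m r + D := by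
  rw [← muU_perm k N m (r ∘ σ) (Tuple.sort σ)]
  have hm : Monotone (σ ∘ Tuple.sort σ) := Tuple.monotone_sort σ
  apply muU_shift k N m hN _ _ (fun i => h0 _)
  intro i j hij
  apply hr
  by_contra hc
  push Not at hc
  have h1 := h i i.2.le
  rw [← cnt_perm σ (Tuple.sort σ)] at h1
  have h2 : (Finset.Iic j).card ≤ cnt (σ ∘ Tuple.sort σ) i := by
    apply Finset.card_le_card
    intro j' hj'
    simp only [Finset.mem_filter, Finset.mem_univ, true_and]
    have := hm (Finset.mem_Iic.1 hj')
    exact lt_of_le_of_lt (Fin.le_def.1 this) (Fin.lt_def.1 hc)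
  rw [Fin.card_Iic] at h2
  omega

lemma cmp_dn (k N m : ℕ) {n : ℕ} (hN : 0 < N) (r : Fin n → ℝ) (hr : Antitone r)
    (h0 : ∀ i, 0 ≤ r i) (σ : Fin n → Fin n) (D : ℕ) (h : ∀ ℓ ≤ n, ℓ ≤ cnt σ ℓ + D) :
    muU k N m r ≤ muU k N m (r ∘ σ) + D := by
  rw [← muU_perm k N m (r ∘ σ) (Tuple.sort σ)]
  have hm : Monotone (σ ∘ Tuple.sort σ) := Tuple.monotone_sort σ
  apply muU_shift k N m hN _ _ h0
  intro i j hij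
  apply hr
  by_contra hc
  push Not at hc
  have h1 := h (j + 1) j.2
  rw [← cnt_perm σ (Tuple.sort σ)] at h1
  have h2 : cnt (σ ∘ Tuple.sort σ) (j+1) ≤ (Finset.Iio i).card := by
    apply Finset.card_le_card
    intro j' hj'
    simp only [Finset.mem_filter, Finset.mem_univ, true_and] at hj'
    rw [Finset.mem_Iio]
    by_contra hcc
    push Not at hcc
    have h3 := Fin.le_def.1 (hm hcc)
    have h4 := Fin.lt_def.1 hc
    simp only [Function.comp_apply] at h3 hj' h4
    omega
  rw [Fin.card_Iio] at h2
  omega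

lemma cnt_var {n : ℕ} (hn : 0 < n) (ℓ : ℕ) (hℓ : ℓ ≤ n) :
    ∑ σ : Fin n → Fin n, ((cnt σ ℓ : ℝ) - ℓ)^2 ≤ n * (n : ℝ)^n := by
  have hn' : (0 : ℝ) < n := by exact_mod_cast hn
  let X : Fin n → ℝ := fun x => (if (x : ℕ) < ℓ then 1 else 0) - (ℓ : ℝ) / n
  have hX0 : ∑ x, X x = 0 := by
    simp only [X, Finset.sum_sub_distrib, Finset.sum_boole, Finset.sum_const, Finset.card_univ,
      Fintype.card_fin, nsmul_eq_mul]
    have : (Finset.univ.filter (fun x : Fin n => (x : ℕ) < ℓ)).card = ℓ := by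
      rw [Fin.card_filter_val_lt]; omega
    rw [this]; field_simp; ring
  have hX1 : ∀ x, X x * X x ≤ 1 := by
    intro x
    have h1 : (ℓ : ℝ) / n ≤ 1 := by rw [div_le_one hn']; exact_mod_cast hℓ
    have h2 : 0 ≤ (ℓ : ℝ) / n := by positivity
    simp only [X]
    split_ifs <;> nlinarith
  have hdev : ∀ σ : Fin n → Fin n, (cnt σ ℓ : ℝ) - ℓ = ∑ i, X (σ i) := by
    intro σ
    simp only [X, Finset.sum_sub_distrib, Finset.sum_boole, Finset.sum_const, Finset.card_univ,
      Fintype.card_fin, nsmul_eq_mul, cnt]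
    field_simp
  simp only [hdev, sq, Finset.sum_mul_sum]
  rw [Finset.sum_comm]
  have : ∀ i : Fin n, ∑ σ : Fin n → Fin n, ∑ j, X (σ i) * X (σ j) ≤ (n:ℝ)^n := by
    intro i
    rw [Finset.sum_comm, ← Finset.add_sum_erase _ _ (Finset.mem_univ i)]
    have h1 : ∑ σ : Fin n → Fin n, X (σ i) * X (σ i) ≤ (n:ℝ)^n := by
      calc _ ≤ ∑ σ : Fin n → Fin n, (1:ℝ) := Finset.sum_le_sum fun σ _ => hX1 _
        _ = _ := by simp
    have h2 : ∑ j ∈ Finset.univ.erase i, ∑ σ : Fin n → Fin n, X (σ i) * X (σ j) = 0 := by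
      apply Finset.sum_eq_zero
      intro j hj
      have hj := Finset.ne_of_mem_erase hj
      have := sum_update (fun σ : Fin n → Fin n => X (σ i) * X (σ j)) i
      simp only [Function.update_self, Function.update_of_ne hj, ← Finset.sum_mul, hX0] at this
      simp only [zero_mul, Finset.sum_const_zero, Fintype.card_fin] at this
      rcases mul_eq_zero.1 this.symm with h | h
      · exact absurd h hn'.ne'
      · exact h
    linarith
  calc _ ≤ ∑ i : Fin n, (n:ℝ)^n := Finset.sum_le_sum fun i _ => this i
    _ = _ := by simp

lemma cnt_mono {n : ℕ} (σ : Fin n → Fin n) {a b : ℕ} (h : a ≤ b) : cnt σ a ≤ cnt σ b := by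
  apply Finset.card_le_card
  intro i
  simp only [Finset.mem_filter, Finset.mem_univ, true_and]
  omega

lemma sampling_dev {n : ℕ} (hn : 0 < n) (e : ℝ) (he : 0 < e) (he1 : e ≤ 1) :
    ∃ D : (Fin n → Fin n) → ℕ, (∀ σ, ∀ ℓ ≤ n, cnt σ ℓ ≤ ℓ + D σ ∧ ℓ ≤ cnt σ ℓ + D σ) ∧
      ∑ σ, (D σ : ℝ) ≤ (n : ℝ)^n * (2 * e * n + 2 * e⁻¹ ^ 2) := by
  have hn' : (0 : ℝ) < n := by exact_mod_cast hn
  have hen : 0 < e * n := by positivity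
  set s := ⌈e * n⌉₊ with hs
  have hs0 : 0 < s := Nat.ceil_pos.2 hen
  have hs1 : e * n ≤ s := Nat.le_ceil _
  have hs2 : (s : ℝ) < e * n + 1 := Nat.ceil_lt_add_one hen.le
  set K := ⌈e⁻¹⌉₊ with hK
  have hK1 : e⁻¹ ≤ K := Nat.le_ceil _
  have hK2 : (K : ℝ) < e⁻¹ + 1 := Nat.ceil_lt_add_one (by positivity)
  have hKs : n ≤ K * s := by
    have : (n : ℝ) ≤ K * s := by
      calc (n : ℝ) = e⁻¹ * (e * n) := by field_simp
        _ ≤ K * s := by gcongr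
    exact_mod_cast this
  let g : ℕ → ℕ := fun q => min (q * s) n
  let R : (Fin n → Fin n) → ℝ := fun σ =>
    s + e * n + ∑ q ∈ Finset.range (K + 2), ((cnt σ (g q) : ℝ) - g q)^2 / (4 * (e * n))
  have hR : ∀ σ, ∀ q ∈ Finset.range (K + 2), |(cnt σ (g q) : ℝ) - g q| + s ≤ R σ := by
    intro σ q hq
    have h1 : ((cnt σ (g q) : ℝ) - g q)^2 / (4 * (e * n)) ≤
        ∑ q ∈ Finset.range (K + 2), ((cnt σ (g q) : ℝ) - g q)^2 / (4 * (e * n)) :=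
      Finset.single_le_sum (f := fun q => ((cnt σ (g q) : ℝ) - g q)^2 / (4 * (e * n)))
        (fun _ _ => by positivity) hq
    have h2 : |(cnt σ (g q) : ℝ) - g q| ≤ e * n + ((cnt σ (g q) : ℝ) - g q)^2 / (4 * (e * n)) := by
      set x := (cnt σ (g q) : ℝ) - g q
      rw [← sub_nonneg]
      have : e * n + x^2 / (4 * (e * n)) - |x| = (2 * (e * n) - |x|)^2 / (4 * (e*n)) := by
        rw [← sq_abs x]; field_simp; ring
      rw [this]; positivity
    simp only [R]; linarith
  have hR0 : ∀ σ, 0 ≤ R σ := fun σ => by simp only [R]; positivity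
  refine ⟨fun σ => ⌊R σ⌋₊, ?_, ?_⟩
  · intro σ ℓ hℓ
    have hdiv := Nat.div_add_mod ℓ s
    have hmod := Nat.mod_lt ℓ hs0
    have hq : ℓ / s ≤ K := Nat.div_le_of_le_mul (by rw [mul_comm]; omega)
    set q := ℓ / s
    have g0 : g q ≤ ℓ := by
      have : q * s ≤ ℓ := by rw [mul_comm]; omega
      exact le_trans (min_le_left _ _) this
    have g1 : ℓ ≤ g (q+1) := by
      refine le_min ?_ hℓ
      rw [add_mul, mul_comm]; omega
    have g0' : ℓ ≤ g q + s := by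
      simp only [g]
      rcases le_total (q * s) n with h | h
      · rw [min_eq_left h, mul_comm]; omega
      · rw [min_eq_right h]; omega
    have g1' : g (q+1) ≤ ℓ + s := by
      refine le_trans (min_le_left _ _) ?_
      rw [add_mul, mul_comm]; omega
    have a1 := hR σ q (Finset.mem_range.2 (by omega))
    have a2 := hR σ (q+1) (Finset.mem_range.2 (by omega))
    have c1 : (cnt σ (g q) : ℝ) ≤ cnt σ ℓ := by exact_mod_cast cnt_mono σ g0
    have c2 : (cnt σ ℓ : ℝ) ≤ cnt σ (g (q+1)) := by exact_mod_cast cnt_mono σ g1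
    have g0r : (ℓ : ℝ) ≤ g q + s := by exact_mod_cast g0'
    have g1r : (g (q+1) : ℝ) ≤ ℓ + s := by exact_mod_cast g1'
    have b1 := neg_abs_le ((cnt σ (g q) : ℝ) - g q)
    have b2 := le_abs_self ((cnt σ (g (q+1)) : ℝ) - g (q+1))
    constructor
    · have : cnt σ ℓ - ℓ ≤ ⌊R σ⌋₊ := by
        apply Nat.le_floor
        rcases le_total ℓ (cnt σ ℓ) with h | h
        · rw [Nat.cast_sub h]; linarith
        · rw [Nat.sub_eq_zero_of_le h]; simpa using hR0 σ
      change _ ≤ _ + ⌊R σ⌋₊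
      omega
    · have : ℓ - cnt σ ℓ ≤ ⌊R σ⌋₊ := by
        apply Nat.le_floor
        rcases le_total (cnt σ ℓ) ℓ with h | h
        · rw [Nat.cast_sub h]; linarith
        · rw [Nat.sub_eq_zero_of_le h]; simpa using hR0 σ
      change _ ≤ _ + ⌊R σ⌋₊
      omega
  · calc ∑ σ, ((⌊R σ⌋₊ : ℕ) : ℝ) ≤ ∑ σ, R σ := Finset.sum_le_sum fun σ _ => Nat.floor_le (hR0 σ)
      _ = (n:ℝ)^n * (s + e * n) + ∑ q ∈ Finset.range (K + 2),
          (∑ σ, ((cnt σ (g q) : ℝ) - g q)^2) / (4 * (e * n)) := by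
        simp only [R]
        rw [Finset.sum_add_distrib, Finset.sum_comm]
        simp only [Finset.sum_div]
        simp only [Finset.sum_const, Finset.card_univ, Fintype.card_fun, Fintype.card_fin,
          nsmul_eq_mul, Nat.cast_pow]
        congr!
      _ ≤ (n:ℝ)^n * (s + e * n) + ∑ q ∈ Finset.range (K + 2),
          (n * (n:ℝ)^n) / (4 * (e * n)) := by
        gcongr with q hq
        exact cnt_var hn _ (min_le_right _ _)
      _ = (n:ℝ)^n * (s + e * n + (K + 2) * e⁻¹ / 4) := by
        simp only [Finset.sum_const, Finset.card_range, nsmul_eq_mul]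
        push_cast
        field_simp
      _ ≤ _ := by
        apply mul_le_mul_of_nonneg_left _ (by positivity)
        have h1 : 1 ≤ e⁻¹ := (one_le_inv₀ he).2 he1
        nlinarith

lemma sampling (k N m : ℕ) {n : ℕ} (hN : 0 < N) (hn : 0 < n) (r : Fin n → ℝ) (hr : Antitone r)
    (h0 : ∀ i, 0 ≤ r i) (e : ℝ) (he : 0 < e) (he1 : e ≤ 1) :
    |∑ σ : Fin n → Fin n, muU k N m (r ∘ σ) - (n : ℝ)^n * muU k N m r| ≤
      (n : ℝ)^n * (2 * e * n + 2 * e⁻¹ ^ 2) := by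
  obtain ⟨D, hD, hs⟩ := sampling_dev hn e he he1
  refine le_trans ?_ hs
  have h1 : (n : ℝ)^n * muU k N m r = ∑ σ : Fin n → Fin n, muU k N m r := by simp
  rw [h1, ← Finset.sum_sub_distrib]
  refine le_trans (Finset.abs_sum_le_sum_abs _ _) (Finset.sum_le_sum fun σ _ => ?_)
  have u := cmp_up k N m hN r hr h0 σ (D σ) (fun ℓ hℓ => (hD σ ℓ hℓ).1)
  have d := cmp_dn k N m hN r hr h0 σ (D σ) (fun ℓ hℓ => (hD σ ℓ hℓ).2)
  rw [abs_le]; constructor <;> linarith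

lemma polar_id {k : ℕ} (hk : 0 < k) (φ : EE k → ℝ) (hm : Measurable φ) (B : ℝ)
    (hB : ∀ y, |φ y| ≤ B) (a : ℝ) (ha : 0 ≤ a) :
    ∫ y in Metric.closedBall (0 : EE k) a, φ y =
      ∫ t in (0:ℝ)..a, t ^ (k - 1) *
        ∫ u : Metric.sphere (0 : EE k) 1, φ (t • (u : EE k)) ∂(volume : Measure (EE k)).toSphere := by
  have hdim : Module.finrank ℝ (EE k) = k := by simp
  let f : EE k → ℝ := (Metric.closedBall (0 : EE k) a).indicator φ
  let g : Metric.sphere (0 : EE k) 1 × Set.Ioi (0 : ℝ) → ℝ :=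
    fun p => f ((p.2 : ℝ) • (p.1 : EE k))
  have hfi : Integrable f := by
    rw [integrable_indicator_iff measurableSet_closedBall]
    apply Measure.integrableOn_of_bounded (M := B)
    · exact measure_closedBall_lt_top.ne
    · exact hm.aestronglyMeasurable
    · filter_upwards with x; exact hB x
  have hgf : ∀ x : ({0}ᶜ : Set (EE k)), g (homeomorphUnitSphereProd (EE k) x) = f x := by
    intro x
    have : (x : EE k) ≠ 0 := x.2
    have hx : ‖(x : EE k)‖ ≠ 0 := norm_ne_zero_iff.2 this
    simp only [g]
    congr 1
    simp [homeomorphUnitSphereProd, smul_smul, hx]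
  have mp := (volume : Measure (EE k)).measurePreserving_homeomorphUnitSphereProd
  have hgi : Integrable g ((volume : Measure (EE k)).toSphere.prod
      (.volumeIoiPow (Module.finrank ℝ (EE k) - 1))) := by
    rw [← mp.integrable_comp_emb (Homeomorph.measurableEmbedding _)]
    have h1 : Integrable f ((volume : Measure (EE k)).restrict {0}ᶜ) := hfi.restrict
    have := (integrableOn_iff_comap_subtypeVal (s := ({0}ᶜ : Set (EE k)))
      (measurableSet_singleton _).compl).1 h1
    refine this.congr ?_
    filter_upwards with x
    exact (hgf x).symm
  calc ∫ y in Metric.closedBall (0 : EE k) a, φ y = ∫ y, f y := by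
        rw [integral_indicator measurableSet_closedBall]
    _ = ∫ x : ({(0)}ᶜ : Set (EE k)), f x ∂((volume : Measure (EE k)).comap (↑)) := by
      have : Nonempty (Fin k) := ⟨⟨0, hk⟩⟩
      rw [integral_subtype_comap (measurableSet_singleton _).compl fun x ↦ f x,
        restrict_compl_singleton]
    _ = ∫ p, g p ∂((volume : Measure (EE k)).toSphere.prod
          (.volumeIoiPow (Module.finrank ℝ (EE k) - 1))) := by
      rw [← mp.integral_comp (Homeomorph.measurableEmbedding _)]
      simp only [hgf]
    _ = ∫ t : Set.Ioi (0:ℝ), (∫ u : Metric.sphere (0 : EE k) 1, g (u, t) ∂(volume : Measure (EE k)).toSphere)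
          ∂(Measure.volumeIoiPow (Module.finrank ℝ (EE k) - 1)) := by
      rw [integral_prod_symm _ hgi]
    _ = ∫ t in Set.Ioi (0:ℝ), t ^ (k-1) * (∫ u : Metric.sphere (0 : EE k) 1,
          f (t • (u : EE k)) ∂(volume : Measure (EE k)).toSphere) := by
      rw [hdim]
      simp only [Measure.volumeIoiPow, ENNReal.ofReal]
      rw [integral_withDensity_eq_integral_smul]
      · simp only [g]
        rw [integral_subtype_comap measurableSet_Ioi fun t : ℝ ↦ Real.toNNReal (t ^ (k - 1)) •
          (∫ u : Metric.sphere (0 : EE k) 1,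
          f (t • (u : EE k)) ∂(volume : Measure (EE k)).toSphere)]
        refine setIntegral_congr_fun measurableSet_Ioi fun x hx ↦ ?_
        rw [NNReal.smul_def, Real.coe_toNNReal _ (pow_nonneg hx.out.le _), smul_eq_mul]
      · exact (measurable_subtype_coe.pow_const _).real_toNNReal
    _ = ∫ t in Set.Ioi (0:ℝ), (Set.Iic a).indicator (fun t => t ^ (k-1) * (∫ u : Metric.sphere (0 : EE k) 1,
          φ (t • (u : EE k)) ∂(volume : Measure (EE k)).toSphere)) t := by
      refine setIntegral_congr_fun measurableSet_Ioi fun t ht ↦ ?_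
      have hn : ∀ u : Metric.sphere (0 : EE k) 1, ‖t • (u : EE k)‖ = t := by
        intro u
        rw [norm_smul, norm_eq_of_mem_sphere, mul_one, Real.norm_of_nonneg (le_of_lt ht)]
      by_cases h : t ≤ a
      · rw [Set.indicator_of_mem (Set.mem_Iic.2 h)]
        congr 2
        ext u
        simp only [f]
        rw [Set.indicator_of_mem]
        simp [hn, h]
      · rw [Set.indicator_of_notMem (by simpa using h)]
        have : ∀ u : Metric.sphere (0 : EE k) 1, f (t • (u : EE k)) = 0 := by
          intro u
          simp only [f]
          rw [Set.indicator_of_notMem]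
          simpa [hn] using h
        simp [this]
    _ = _ := by
      rw [setIntegral_indicator measurableSet_Iic, intervalIntegral.integral_of_le ha]
      rfl

lemma polar_super {k : ℕ} (hk : 0 < k) (φ : EE k → ℝ) (hm : Measurable φ) (B : ℝ)
    (hB : ∀ y, |φ y| ≤ B) (c R : ℝ)
    (hφ : ∀ y, ‖y‖ ≤ R → ∀ t ∈ Set.Icc (0:ℝ) 1, φ y + c * (‖y‖ ^ k - (t * ‖y‖) ^ k) ≤ φ (t • y)) :
    ∃ Ψ : ℝ → ℝ, (0 ≤ c → AntitoneOn Ψ (Set.Icc 0 R)) ∧ ∀ a ∈ Set.Icc 0 R, ∀ b ∈ Set.Icc 0 R,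
      (∫ y in Metric.closedBall (0 : EE k) a, φ y) - (∫ y in Metric.closedBall (0 : EE k) b, φ y) ≤
       Ψ b * (a ^ k - b ^ k) -
        c * volume.real (Metric.ball (0 : EE k) 1) / 2 * (a ^ k - b ^ k)^2 := by
  have hdim : Module.finrank ℝ (EE k) = k := by simp
  have hk' : (0:ℝ) < k := by exact_mod_cast hk
  have hkk : k - 1 + 1 = k := by omega
  set σ := (volume : Measure (EE k)).toSphere with hσ
  have hσu : σ.real Set.univ = k * volume.real (Metric.ball (0 : EE k) 1) := by
    rw [hσ, Measure.toSphere_real_apply_univ, hdim]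
  set s := σ.real Set.univ with hs
  let Ψ : ℝ → ℝ := fun t => ∫ u : Metric.sphere (0 : EE k) 1, φ (t • (u : EE k)) ∂σ
  have hmeas : Measurable (fun p : ℝ × Metric.sphere (0 : EE k) 1 => φ (p.1 • (p.2 : EE k))) := by
    apply hm.comp
    fun_prop
  have hint : ∀ t : ℝ, Integrable (fun u : Metric.sphere (0 : EE k) 1 => φ (t • (u : EE k))) σ := by
    intro t
    refine Integrable.of_bound (hmeas.comp measurable_prodMk_left).aestronglyMeasurable B ?_
    filter_upwards with u; exact hB _
  have hΨ : ∀ t' t : ℝ, 0 ≤ t' → t' ≤ t → t ≤ R → Ψ t + c * s * (t ^ k - t' ^ k) ≤ Ψ t' := by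
    intro t' t h0 h1 h2
    have h3 : Ψ t + c * s * (t ^ k - t' ^ k) =
        ∫ u : Metric.sphere (0 : EE k) 1, (φ (t • (u : EE k)) + c * (t ^ k - t' ^ k)) ∂σ := by
      rw [integral_add (hint t) (integrable_const _), integral_const, smul_eq_mul]
      simp only [Ψ, hs]; ring
    rw [h3]
    apply integral_mono ((hint t).add (integrable_const _)) (hint t')
    intro u
    have hn : ‖t • (u : EE k)‖ = t := by
      rw [norm_smul, norm_eq_of_mem_sphere, mul_one, Real.norm_of_nonneg (h0.trans h1)]
    rcases eq_or_lt_of_le (h0.trans h1) with ht | ht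
    · have : t' = 0 := le_antisymm (by linarith) h0
      subst this; subst ht; simp
    · have := hφ (t • (u : EE k)) (by rw [hn]; exact h2) (t' / t)
        ⟨by positivity, (div_le_one ht).2 h1⟩
      rw [hn, smul_smul, div_mul_cancel₀ _ ht.ne'] at this
      exact this
  have hΨB : ∀ t : ℝ, ‖Ψ t‖ ≤ B * s := by
    intro t
    exact norm_integral_le_of_norm_le_const (Filter.Eventually.of_forall fun u => hB _)
  have hΨm : StronglyMeasurable Ψ := hmeas.stronglyMeasurable.integral_prod_right'
  have hII : ∀ a b : ℝ, IntervalIntegrable (fun t => t ^ (k-1) * Ψ t) volume a b := by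
    intro a b
    have : IntervalIntegrable Ψ volume a b := by
      rw [intervalIntegrable_iff]
      apply Measure.integrableOn_of_bounded (M := B * s)
      · simp
      · exact hΨm.aestronglyMeasurable
      · filter_upwards with x; exact hΨB x
    exact this.continuousOn_mul (by fun_prop)
  have hFTC : ∀ a b d : ℝ, ∫ t in a..b, t ^ (k-1) * (Ψ d - c * s * (t ^ k - d ^ k)) =
      Ψ d * (b ^ k - a ^ k) / k - c * s * ((b ^ k - d ^ k)^2 - (a ^ k - d ^ k)^2) / (2 * k) := by
    intro a b d
    have hder : ∀ t ∈ Set.uIcc a b, HasDerivAt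
        (fun t : ℝ => Ψ d * t ^ k / k - c * s * (t ^ k - d ^ k)^2 / (2 * k))
        (t ^ (k-1) * (Ψ d - c * s * (t ^ k - d ^ k))) t := by
      intro t _
      have h1 : HasDerivAt (fun t : ℝ => t ^ k) (k * t ^ (k-1)) t := hasDerivAt_pow k t
      have h2 := (h1.const_mul (Ψ d)).div_const (k:ℝ)
      have h3 := ((((h1.sub_const (d ^ k)).pow 2).const_mul (c * s))).div_const (2 * (k:ℝ))
      refine (h2.sub h3).congr_deriv ?_
      symm
      have h21 : (2:ℕ) - 1 = 1 := rfl
      rw [h21, pow_one]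
      push_cast
      field_simp
    rw [intervalIntegral.integral_eq_sub_of_hasDerivAt hder (Continuous.intervalIntegrable (by fun_prop) _ _)]
    field_simp
    ring
  have hI : ∀ a ∈ Set.Icc 0 R, ∫ y in Metric.closedBall (0 : EE k) a, φ y =
      ∫ t in (0:ℝ)..a, t ^ (k - 1) * Ψ t := fun a ha => polar_id hk φ hm B hB a ha.1
  refine ⟨fun t => Ψ t / k, ?_, ?_⟩
  · intro hc x hx y hy hxy
    have := hΨ x y hx.1 hxy hy.2
    have h2 : 0 ≤ c * s * (y ^ k - x ^ k) := by
      have : x ^ k ≤ y ^ k := pow_le_pow_left₀ hx.1 hxy k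
      have hs0 : 0 ≤ s := measureReal_nonneg
      exact mul_nonneg (mul_nonneg hc hs0) (by linarith)
    simp only
    gcongr
    linarith
  · intro a ha b hb
    rw [hI a ha, hI b hb]
    have hgoal : Ψ b / k * (a ^ k - b ^ k) -
        c * volume.real (Metric.ball (0 : EE k) 1) / 2 * (a ^ k - b ^ k)^2 =
        ∫ t in b..a, t ^ (k-1) * (Ψ b - c * s * (t ^ k - b ^ k)) := by
      rw [hFTC, hσu]; field_simp; ring
    simp only
    rw [hgoal, intervalIntegral.integral_interval_sub_left (hII _ _) (hII _ _)]
    have hcont : ∀ p q : ℝ, IntervalIntegrable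
        (fun t : ℝ => t ^ (k-1) * (Ψ b - c * s * (t ^ k - b ^ k))) volume p q :=
      fun p q => Continuous.intervalIntegrable (by fun_prop) _ _
    rcases le_total b a with h | h
    · apply intervalIntegral.integral_mono_on h (hII _ _) (hcont _ _)
      intro t ht
      have := hΨ b t hb.1 ht.1 (ht.2.trans ha.2)
      have : 0 ≤ t := hb.1.trans ht.1
      apply mul_le_mul_of_nonneg_left _ (by positivity)
      linarith
    · rw [intervalIntegral.integral_symm, intervalIntegral.integral_symm a b, neg_le_neg_iff]
      apply intervalIntegral.integral_mono_on h (hcont _ _) (hII _ _)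
      intro t ht
      have := hΨ t b (ha.1.trans ht.1) ht.2 hb.2
      have : 0 ≤ t := ha.1.trans ht.1
      apply mul_le_mul_of_nonneg_left _ (by positivity)
      linarith

lemma meas_and {X : Type*} [MeasurableSpace X] {p q : X → Prop} (hp : MeasurableSet {x | p x})
    (hq : MeasurableSet {x | q x}) : MeasurableSet {x | p x ∧ q x} := hp.inter hq

lemma dle_meas {k : ℕ} {X : Type*} [MeasurableSpace X] {f g : X → EE k} (hf : Measurable f)
    (hg : Measurable g) (ρ : ℝ) : MeasurableSet {x | dist (f x) (g x) ≤ ρ} :=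
  measurableSet_le (hf.dist hg) measurable_const

/-- freeness of demand `j` with supply `i` removed -/
def Fr (k N : ℕ) {n m : ℕ} (r : Fin n → ℝ) (i : Fin n) (ω : (Fin n → EE k) × (Fin m → EE k))
    (j : Fin m) : Prop := IsFree (rowDel (REL k N r ω) i) j

lemma rowDel_REL_congr (k N : ℕ) {n m : ℕ} (r : Fin n → ℝ) (i : Fin n) (v : ℝ) (s : EE k)
    (ω : (Fin n → EE k) × (Fin m → EE k)) :
    rowDel (REL k N (Function.update r i v) (Function.update ω.1 i s, ω.2)) i =
      rowDel (REL k N r ω) i := by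
  funext i' j
  unfold rowDel REL adjOf
  by_cases h : i' = i
  · simp [h]
  · simp [h]

lemma Fr_update (k N : ℕ) {n m : ℕ} (r : Fin n → ℝ) (i : Fin n) (s : EE k)
    (ω : (Fin n → EE k) × (Fin m → EE k)) :
    Fr k N r i (Function.update ω.1 i s, ω.2) = Fr k N r i ω := by
  have := rowDel_REL_congr k N r i (r i) s ω
  rw [Function.update_eq_self] at this
  funext j
  unfold Fr
  rw [this]

lemma Fr_meas (k N : ℕ) {n m : ℕ} (r : Fin n → ℝ) (i : Fin n) (j : Fin m) :
    MeasurableSet {ω : (Fin n → EE k) × (Fin m → EE k) | Fr k N r i ω j} := by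
  apply measurableSet_setOfPred.2
  exact REL_comp_meas k N r (fun A => IsFree (rowDel A i) j)

/-- demand `j` is the (lexicographically) closest free demand to `s` -/
def Win {k m : ℕ} (F : Fin m → Prop) (D : Fin m → EE k) (j : Fin m) (s : EE k) : Prop :=
  F j ∧ ∀ l, F l → l ≠ j → (l < j → dist s (D j) < dist s (D l)) ∧
    (j < l → dist s (D j) ≤ dist s (D l))

lemma win_unique {k m : ℕ} {F : Fin m → Prop} {D : Fin m → EE k} {j j' : Fin m} {s : EE k}
    (h : Win F D j s) (h' : Win F D j' s) : j = j' := by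
  by_contra hne
  rcases lt_or_gt_of_ne hne with hlt | hlt
  · have h1 := (h'.2 j h.1 hne).1 hlt
    have h2 := (h.2 j' h'.1 (Ne.symm hne)).2 hlt
    linarith
  · have h1 := (h'.2 j h.1 hne).2 hlt
    have h2 := (h.2 j' h'.1 (Ne.symm hne)).1 hlt
    linarith

lemma win_exists_iff {k m : ℕ} (F : Fin m → Prop) (D : Fin m → EE k) (s : EE k) (ρ : ℝ) :
    (∃ j, F j ∧ dist s (D j) ≤ ρ) ↔ ∃ j, Win F D j s ∧ dist s (D j) ≤ ρ := by
  constructor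
  · rintro ⟨j0, hF, hd⟩
    obtain ⟨j, hj, hmin⟩ := Finset.exists_min_image (Finset.univ.filter F)
      (fun j => toLex (dist s (D j), j)) ⟨j0, by simpa using hF⟩
    simp only [Finset.mem_filter, Finset.mem_univ, true_and] at hj hmin
    refine ⟨j, ⟨hj, ?_⟩, ?_⟩
    · intro l hl hne
      have := hmin l hl
      rw [Prod.Lex.le_iff] at this
      simp only [ofLex_toLex] at this
      constructor
      · intro hlt
        rcases this with h | ⟨h1, h2⟩
        · exact h
        · exact absurd hlt (not_lt.2 h2)
      · intro _
        rcases this with h | ⟨h1, h2⟩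
        · exact h.le
        · exact h1.le
    · have := hmin j0 hF
      rw [Prod.Lex.le_iff] at this
      simp only [ofLex_toLex] at this
      rcases this with h | ⟨h1, h2⟩
      · exact h.le.trans hd
      · exact h1.le.trans hd
  · rintro ⟨j, h, hd⟩
    exact ⟨j, h.1, hd⟩

lemma win_meas (k N : ℕ) {n m : ℕ} (r : Fin n → ℝ) (i : Fin n) (j : Fin m) {X : Type*}
    [MeasurableSpace X] (f : X → (Fin n → EE k) × (Fin m → EE k)) (g : X → EE k)
    (hf : Measurable f) (hg : Measurable g) :
    MeasurableSet {x | Win (Fr k N r i (f x)) (f x).2 j (g x)} := by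
  have hF : ∀ l, MeasurableSet {x | Fr k N r i (f x) l} := fun l => hf (Fr_meas k N r i l)
  have hd : ∀ l, Measurable fun x => dist (g x) ((f x).2 l) := by
    intro l
    exact hg.dist ((measurable_pi_apply l).comp (measurable_snd.comp hf))
  unfold Win
  refine meas_and (hF j) ?_
  rw [Set.ofPred_forall]
  refine MeasurableSet.iInter fun l => ?_
  refine MeasurableSet.imp (hF l) (MeasurableSet.imp (MeasurableSet.const _) ?_)
  exact meas_and (MeasurableSet.imp (MeasurableSet.const _) (measurableSet_lt (hd j) (hd l)))
    (MeasurableSet.imp (MeasurableSet.const _) (measurableSet_le (hd j) (hd l)))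

lemma mp_PP (k n m : ℕ) (i : Fin n) :
    MeasurePreserving (fun p : ((Fin n → EE k) × (Fin m → EE k)) × EE k =>
      (Function.update p.1.1 i p.2, p.1.2)) ((PP k n m).prod (unifCube k)) (PP k n m) := by
  have h1 := measurePreserving_prodAssoc (Measure.pi fun _ : Fin n => unifCube k)
    (Measure.pi fun _ : Fin m => unifCube k) (unifCube k)
  have h2 := (MeasurePreserving.id (Measure.pi fun _ : Fin n => unifCube k)).prod
    (Measure.measurePreserving_swap (μ := Measure.pi fun _ : Fin m => unifCube k)
      (ν := unifCube k))
  have h3 := (measurePreserving_prodAssoc (Measure.pi fun _ : Fin n => unifCube k)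
    (unifCube k) (Measure.pi fun _ : Fin m => unifCube k)).symm
  have h4 := (mp_update (unifCube k) i).prod
    (MeasurePreserving.id (Measure.pi fun _ : Fin m => unifCube k))
  unfold PP
  convert h4.comp (h3.comp (h2.comp h1)) using 1
  funext p
  apply Prod.ext
  · funext l
    by_cases h : l = i
    · subst h; simp [Prod.map, MeasurableEquiv.prodAssoc]
    · simp [Prod.map, MeasurableEquiv.prodAssoc, h]
  · rfl

/-- winning displacement event -/
def AA (k N : ℕ) {n m : ℕ} (r : Fin n → ℝ) (i : Fin n) (j : Fin m) (y : EE k) :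
    Set ((Fin n → EE k) × (Fin m → EE k)) :=
  {ω | ω.2 j + y ∈ QQ k ∧ Win (Fr k N r i ω) ω.2 j (ω.2 j + y)}

lemma AA_meas2 (k N : ℕ) {n m : ℕ} (r : Fin n → ℝ) (i : Fin n) (j : Fin m) :
    MeasurableSet {p : ((Fin n → EE k) × (Fin m → EE k)) × EE k | p.1 ∈ AA k N r i j p.2} := by
  have hg : Measurable fun p : ((Fin n → EE k) × (Fin m → EE k)) × EE k => p.1.2 j + p.2 := by
    fun_prop
  exact (hg (QQ_meas k)).inter (win_meas k N r i j _ _ measurable_fst hg)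

lemma AA_meas (k N : ℕ) {n m : ℕ} (r : Fin n → ℝ) (i : Fin n) (j : Fin m) (y : EE k) :
    MeasurableSet (AA k N r i j y) :=
  (measurable_prodMk_right (y := y)) (AA_meas2 k N r i j)

/-- density of the hitting displacement -/
def PHI (k N : ℕ) {n : ℕ} (m : ℕ) (r : Fin n → ℝ) (i : Fin n) (y : EE k) : ℝ :=
  ∑ j : Fin m, (PP k n m).real (AA k N r i j y)

lemma PHIj_meas (k N : ℕ) {n : ℕ} (m : ℕ) (r : Fin n → ℝ) (i : Fin n) (j : Fin m) :
    Measurable (fun y => PP k n m (AA k N r i j y)) :=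
  measurable_measure_prodMk_right (AA_meas2 k N r i j)

lemma PHI_meas (k N : ℕ) {n : ℕ} (m : ℕ) (r : Fin n → ℝ) (i : Fin n) :
    Measurable (PHI k N m r i) := by
  unfold PHI
  apply Finset.measurable_fun_sum
  intro j _
  exact (PHIj_meas k N m r i j).ennreal_toReal

lemma PHI_bdd (k N : ℕ) {n : ℕ} (m : ℕ) (r : Fin n → ℝ) (i : Fin n) (y : EE k) :
    |PHI k N m r i y| ≤ m := by
  unfold PHI
  rw [abs_of_nonneg (Finset.sum_nonneg fun j _ => measureReal_nonneg)]
  calc _ ≤ ∑ j : Fin m, (1:ℝ) := Finset.sum_le_sum fun j _ => measureReal_le_one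
    _ = m := by simp

lemma W_eq (k N : ℕ) {n : ℕ} (m : ℕ) (r : Fin n → ℝ) (i : Fin n) (j : Fin m) (ρ : ℝ) :
    PP k n m {ω | Win (Fr k N r i ω) ω.2 j (ω.1 i) ∧ dist (ω.1 i) (ω.2 j) ≤ ρ} =
      ∫⁻ y in Metric.closedBall (0 : EE k) ρ, PP k n m (AA k N r i j y) := by
  have hW : MeasurableSet {ω : (Fin n → EE k) × (Fin m → EE k) |
      Win (Fr k N r i ω) ω.2 j (ω.1 i) ∧ dist (ω.1 i) (ω.2 j) ≤ ρ} := by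
    refine meas_and (win_meas k N r i j _ _ measurable_id (by fun_prop)) ?_
    exact dle_meas (by fun_prop) (by fun_prop) ρ
  have h1 := (mp_PP k n m i).measure_preimage hW.nullMeasurableSet
  rw [← h1]
  have h2 : (fun p : ((Fin n → EE k) × (Fin m → EE k)) × EE k =>
      (Function.update p.1.1 i p.2, p.1.2)) ⁻¹' {ω : (Fin n → EE k) × (Fin m → EE k) |
      Win (Fr k N r i ω) ω.2 j (ω.1 i) ∧ dist (ω.1 i) (ω.2 j) ≤ ρ} =
      {p | Win (Fr k N r i p.1) p.1.2 j p.2 ∧ dist p.2 (p.1.2 j) ≤ ρ} := by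
    ext p
    simp only [Set.mem_preimage, Set.mem_ofPred_eq, Fr_update, Function.update_self]
  rw [h2]
  have hT : MeasurableSet {p : ((Fin n → EE k) × (Fin m → EE k)) × EE k |
      Win (Fr k N r i p.1) p.1.2 j p.2 ∧ dist p.2 (p.1.2 j) ≤ ρ} := by
    refine meas_and (win_meas k N r i j _ _ measurable_fst measurable_snd) ?_
    exact dle_meas (by fun_prop) (by fun_prop) ρ
  rw [Measure.prod_apply hT]
  have hU : MeasurableSet {p : ((Fin n → EE k) × (Fin m → EE k)) × EE k |
      p.1 ∈ AA k N r i j p.2 ∧ p.2 ∈ Metric.closedBall (0 : EE k) ρ} :=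
    (AA_meas2 k N r i j).inter (measurable_snd measurableSet_closedBall)
  have h3 : ∀ ω : (Fin n → EE k) × (Fin m → EE k),
      unifCube k (Prod.mk ω ⁻¹' {p | Win (Fr k N r i p.1) p.1.2 j p.2 ∧ dist p.2 (p.1.2 j) ≤ ρ})
      = volume (Prod.mk ω ⁻¹' {p : ((Fin n → EE k) × (Fin m → EE k)) × EE k |
      p.1 ∈ AA k N r i j p.2 ∧ p.2 ∈ Metric.closedBall (0 : EE k) ρ}) := by
    intro ω
    rw [unifCube_eq, Measure.restrict_apply (measurable_prodMk_left hT),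
      ← measure_preimage_add volume (ω.2 j)]
    congr 1
    ext y
    simp only [Set.mem_preimage, Set.mem_inter_iff, Set.mem_ofPred_eq, AA,
      mem_closedBall_zero_iff, dist_self_add_left]
    tauto
  simp_rw [h3]
  rw [← Measure.prod_apply hU, Measure.prod_apply_symm hU,
    ← lintegral_indicator measurableSet_closedBall]
  apply lintegral_congr
  intro y
  by_cases hy : y ∈ Metric.closedBall (0 : EE k) ρ
  · rw [Set.indicator_of_mem hy]
    congr 1
    ext ω
    simp only [Set.mem_preimage, Set.mem_ofPred_eq]
    tauto
  · rw [Set.indicator_of_notMem hy]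
    convert measure_empty (μ := PP k n m)
    ext ω
    simp only [Set.mem_preimage, Set.mem_ofPred_eq, Set.mem_empty_iff_false]
    tauto

lemma hit_eq (k N : ℕ) {n : ℕ} (m : ℕ) (r : Fin n → ℝ) (i : Fin n) (ρ : ℝ) :
    (PP k n m).real {ω | ∃ j, Fr k N r i ω j ∧ dist (ω.1 i) (ω.2 j) ≤ ρ} =
      ∫ y in Metric.closedBall (0 : EE k) ρ, PHI k N m r i y := by
  have h1 : {ω : (Fin n → EE k) × (Fin m → EE k) | ∃ j, Fr k N r i ω j ∧ dist (ω.1 i) (ω.2 j) ≤ ρ}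
    = ⋃ j, {ω | Win (Fr k N r i ω) ω.2 j (ω.1 i) ∧ dist (ω.1 i) (ω.2 j) ≤ ρ} := by
    ext ω
    simp only [Set.mem_ofPred_eq, Set.mem_iUnion]
    exact win_exists_iff _ _ _ _
  rw [h1, measureReal_def, measure_iUnion, tsum_fintype, ENNReal.toReal_sum]
  · unfold PHI
    rw [integral_finsetSum]
    · apply Finset.sum_congr rfl
      intro j _
      rw [W_eq]
      simp only [measureReal_def]
      rw [integral_toReal (PHIj_meas k N m r i j).aemeasurable]
      filter_upwards with y; exact measure_lt_top _ _
    · intro j _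
      apply Measure.integrableOn_of_bounded (M := 1)
      · exact measure_closedBall_lt_top.ne
      · exact (PHIj_meas k N m r i j).ennreal_toReal.aestronglyMeasurable
      · filter_upwards with y
        rw [Real.norm_of_nonneg measureReal_nonneg]
        exact measureReal_le_one
  · intro j _; exact measure_ne_top _ _
  · intro j j' hne
    rw [Function.onFun, Set.disjoint_left]
    rintro ω h h'
    exact hne (win_unique h.1 h'.1)
  · intro j
    refine meas_and (win_meas k N r i j _ _ measurable_id (by fun_prop)) ?_
    exact dle_meas (by fun_prop) (by fun_prop) ρ

lemma row_rep (k N : ℕ) {n : ℕ} (m : ℕ) (r : Fin n → ℝ) (i : Fin n) (v : ℝ) :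
    muU k N m (Function.update r i v) =
      (∫ ω, (matchingNumber (rowDel (REL k N r ω) i) : ℝ) ∂(PP k n m)) +
      ∫ y in Metric.closedBall (0 : EE k) ((v / (N:ℝ)) ^ ((1:ℝ) / (k:ℝ))), PHI k N m r i y := by
  rw [muU_eq, ← hit_eq]
  have hms : MeasurableSet {ω : (Fin n → EE k) × (Fin m → EE k) | ∃ j, Fr k N r i ω j ∧
      dist (ω.1 i) (ω.2 j) ≤ ((v / (N:ℝ)) ^ ((1:ℝ) / (k:ℝ)))} := by
    rw [Set.ofPred_exists]
    refine MeasurableSet.iUnion fun j => ?_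
    exact meas_and (Fr_meas k N r i j) (dle_meas (by fun_prop) (by fun_prop) _)
  rw [← integral_indicator_one hms, ← integral_add]
  · apply integral_congr_ae
    filter_upwards with ω
    have h1 := mn_decomp (REL k N (Function.update r i v) ω) i
    have h2 := rowDel_REL_congr k N r i v (ω.1 i) ω
    rw [Function.update_eq_self] at h2
    rw [h2] at h1
    rw [h1]
    push_cast
    congr 1
    have h3 : ∀ j, REL k N (Function.update r i v) ω i j ↔
        dist (ω.1 i) (ω.2 j) ≤ ((v / (N:ℝ)) ^ ((1:ℝ) / (k:ℝ))) := by
      intro j; unfold REL adjOf; rw [Function.update_self]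
    simp only [h3]
    rw [Set.indicator_apply]
    simp only [Set.mem_ofPred_eq, Fr, Pi.one_apply]
    congr
  · exact REL_comp_int k N r (fun A => (matchingNumber (rowDel A i) : ℝ))
  · exact (integrable_const 1).indicator hms

lemma coord_le {k : ℕ} (y : EE k) (a : Fin k) : |y a| ≤ ‖y‖ := by
  simpa using PiLp.norm_apply_le y a

/-- inner box -/
def KK (k : ℕ) : Set (EE k) := {x | ∀ i, x i ∈ Set.Icc (1/4 : ℝ) (3/4)}

lemma KK_meas (k : ℕ) : MeasurableSet (KK k) := box_meas k (1/4) (3/4)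

lemma KK_add {k : ℕ} {x y : EE k} (hx : x ∈ KK k) (hy : ‖y‖ ≤ 1/4) : x + y ∈ QQ k := by
  intro a
  have h1 := hx a
  have h2 := abs_le.1 ((coord_le y a).trans hy)
  simp only [PiLp.add_apply, Set.mem_Icc] at *
  constructor <;> linarith [h1.1, h1.2, h2.1, h2.2]

/-- the crescent -/
def GG {k : ℕ} (y : EE k) (t : ℝ) : Set (EE k) :=
  Metric.ball y ‖y‖ \ Metric.closedBall (t • y) (t * ‖y‖)

lemma GG_meas {k : ℕ} (y : EE k) (t : ℝ) : MeasurableSet (GG y t) :=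
  measurableSet_ball.diff measurableSet_closedBall

lemma GG_norm {k : ℕ} {y : EE k} {t : ℝ} {z : EE k} (h : z ∈ GG y t) : ‖z‖ < 2 * ‖y‖ := by
  have := h.1
  rw [mem_ball_iff_norm] at this
  have h2 : ‖z‖ ≤ ‖z - y‖ + ‖y‖ := by simpa using norm_add_le (z - y) y
  linarith

lemma GG_vol {k : ℕ} (hk : 0 < k) (y : EE k) (t : ℝ) (ht : 0 ≤ t) :
    volume.real (Metric.ball (0 : EE k) 1) * (‖y‖ ^ k - (t * ‖y‖) ^ k) ≤ volume.real (GG y t) := by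
  have : Nonempty (Fin k) := ⟨⟨0, hk⟩⟩
  have hdim : Module.finrank ℝ (EE k) = k := by simp
  have h1 : volume.real (Metric.ball y ‖y‖) = ‖y‖ ^ k * volume.real (Metric.ball (0 : EE k) 1) := by
    rw [measureReal_def, Measure.addHaar_ball _ _ (norm_nonneg _), hdim, ENNReal.toReal_mul,
      ENNReal.toReal_ofReal (by positivity), measureReal_def]
  have h2 : volume.real (Metric.closedBall (t • y) (t * ‖y‖)) =
      (t * ‖y‖) ^ k * volume.real (Metric.ball (0 : EE k) 1) := by
    rw [Measure.addHaar_real_closedBall _ _ (by positivity), hdim]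
  have h3 := le_measureReal_sdiff (μ := (volume : Measure (EE k))) (s₂ := Metric.closedBall (t • y) (t * ‖y‖))
    (s₁ := Metric.ball y ‖y‖) (h := measure_closedBall_lt_top.ne)
  rw [h1, h2] at h3
  unfold GG
  linarith

/-- the good event -/
def EV (k n : ℕ) {m : ℕ} (R : ℝ) (y : EE k) (t : ℝ) (j j' : Fin m) :
    Set ((Fin n → EE k) × (Fin m → EE k)) :=
  {ω | (∀ i, ω.1 i ∈ (Metric.closedBall (ω.2 j) (3 * R))ᶜ) ∧ ω.2 j ∈ KK k ∧
    ∀ l, l ≠ j → ω.2 l - ω.2 j ∈ if l = j' then GG y t else (Metric.closedBall 0 (2 * R))ᶜ}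

lemma forall_meas {X ι : Type*} [Countable ι] [MeasurableSpace X] {p : ι → X → Prop}
    (h : ∀ i, MeasurableSet {x | p i x}) : MeasurableSet {x | ∀ i, p i x} := by
  rw [Set.ofPred_forall]
  exact MeasurableSet.iInter h

lemma EV_meas (k n : ℕ) {m : ℕ} (R : ℝ) (y : EE k) (t : ℝ) (j j' : Fin m) :
    MeasurableSet (EV k n R y t j j') := by
  refine meas_and (forall_meas fun i => ?_) (meas_and ?_ (forall_meas fun l => ?_))
  · simp only [Set.mem_compl_iff, Metric.mem_closedBall]
    exact (dle_meas (by fun_prop) (by fun_prop) _).compl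
  · exact (show Measurable fun ω : (Fin n → EE k) × (Fin m → EE k) => ω.2 j by fun_prop)
      (KK_meas k)
  · refine MeasurableSet.imp (MeasurableSet.const _) ?_
    have : MeasurableSet (if l = j' then GG y t else (Metric.closedBall (0 : EE k) (2 * R))ᶜ) := by
      split_ifs
      · exact GG_meas y t
      · exact measurableSet_closedBall.compl
    exact (show Measurable fun ω : (Fin n → EE k) × (Fin m → EE k) => ω.2 l - ω.2 j by fun_prop) this

lemma KK_unif (k : ℕ) : unifCube k (KK k) = ENNReal.ofReal (1/2) ^ k := by
  rw [unifCube_eq, Measure.restrict_apply (KK_meas k), Set.inter_eq_left.2]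
  · rw [KK, box_volume]; norm_num
  · intro x hx
    simpa using KK_add (y := 0) hx (by simp)

lemma D_lb (k : ℕ) {m : ℕ} (R : ℝ) (hR : 2 * R ≤ 1/4) (y : EE k) (hy : ‖y‖ ≤ R) (t : ℝ)
    (j j' : Fin m) (hne : j' ≠ j) (p : ENNReal)
    (hp : ∀ x : EE k, p ≤ unifCube k (Metric.closedBall x (3 * R))ᶜ) :
    ENNReal.ofReal (1/2) ^ k * (volume (GG y t) * p ^ m) ≤
    (Measure.pi fun _ : Fin m => unifCube k) {D | D j ∈ KK k ∧
    ∀ l, l ≠ j → D l - D j ∈ if l = j' then GG y t else (Metric.closedBall 0 (2 * R))ᶜ} := by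
  have hR0 : 0 ≤ R := (norm_nonneg _).trans hy
  have hp1 : p ≤ 1 := (hp 0).trans prob_le_one
  set G : Fin m → Set (EE k) := fun l => if l = j' then GG y t else (Metric.closedBall 0 (2 * R))ᶜ
    with hG
  have hGm : ∀ l, MeasurableSet (G l) := by
    intro l
    simp only [hG]
    split_ifs
    · exact GG_meas y t
    · exact measurableSet_closedBall.compl
  have hT : MeasurableSet {D : Fin m → EE k | D j ∈ KK k ∧ ∀ l, l ≠ j → D l - D j ∈ G l} := by
    refine meas_and ?_ (forall_meas fun l => ?_)
    · exact (measurable_pi_apply j) (KK_meas k)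
    · refine MeasurableSet.imp (MeasurableSet.const _) ?_
      exact (show Measurable fun D : (Fin m → EE k) => D l - D j by fun_prop) (hGm l)
  have hmp := mp_update (unifCube k) j
  change _ ≤ (Measure.pi fun _ : Fin m => unifCube k)
    {D | D j ∈ KK k ∧ ∀ l, l ≠ j → D l - D j ∈ G l}
  rw [← hmp.measure_preimage hT.nullMeasurableSet,
    Measure.prod_apply_symm (hmp.measurable hT), ← KK_unif k]
  calc unifCube k (KK k) * (volume (GG y t) * p ^ m)
      = ∫⁻ x, (KK k).indicator (fun _ => volume (GG y t) * p ^ m) x ∂(unifCube k) := by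
        rw [lintegral_indicator_const (KK_meas k), mul_comm]
    _ ≤ _ := by
        apply lintegral_mono
        intro x
        by_cases hx : x ∈ KK k
        · rw [Set.indicator_of_mem hx]
          have hsub : Set.pi Set.univ (fun l => if l = j then Set.univ else (fun z => z - x) ⁻¹' (G l)) ⊆
            (fun D : Fin m → EE k => (D, x)) ⁻¹' ((fun q : (Fin m → EE k) × EE k =>
              @Function.update (Fin m) (fun _ => EE k) (fun a b => Classical.propDecidable (a = b)) q.1 j q.2) ⁻¹'
              {D | D j ∈ KK k ∧ ∀ l, l ≠ j → D l - D j ∈ G l}) := by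
            intro D hD
            simp only [Set.mem_preimage, Set.mem_ofPred_eq, Function.update_self]
            refine ⟨hx, fun l hl => ?_⟩
            have := hD l (Set.mem_univ _)
            simp only [hl, if_false] at this
            simpa [hl] using this
          refine le_trans ?_ (measure_mono hsub)
          rw [Measure.pi_pi, ← Finset.mul_prod_erase Finset.univ _ (Finset.mem_univ j')]
          apply mul_le_mul'
          · rw [if_neg hne, unifCube_eq, Measure.restrict_apply ((measurable_sub_const x) (hGm _))]
            rw [← measure_preimage_add_right volume (-x)]
            apply measure_mono
            intro z hz
            simp only [Set.mem_preimage, ← sub_eq_add_neg] at hz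
            have hz2 : z - x ∈ GG y t := hz
            have := GG_norm hz2
            refine ⟨?_, ?_⟩
            · simp only [Set.mem_preimage, hG, if_true]; exact hz2
            · have := KK_add (y := z - x) hx (by linarith)
              simpa using this
          · calc p ^ m ≤ p ^ (Finset.univ.erase j').card :=
                pow_le_pow_right_of_le_one' hp1 (by
                  simp)
              _ = ∏ l ∈ Finset.univ.erase j', p := by rw [Finset.prod_const]
              _ ≤ _ := by
                apply Finset.prod_le_prod'
                intro l hl
                have hl' := Finset.ne_of_mem_erase hl
                by_cases hlj : l = j
                · rw [if_pos hlj, measure_univ]; exact hp1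
                · rw [if_neg hlj]
                  refine (hp x).trans (measure_mono ?_)
                  intro z hz
                  simp only [Set.mem_preimage, hG, if_neg hl']
                  simp only [Set.mem_compl_iff, Metric.mem_closedBall, not_le, dist_eq_norm,
                    sub_zero] at hz ⊢
                  linarith
        · rw [Set.indicator_of_notMem hx]; exact zero_le

lemma EV_lb (k n : ℕ) {m : ℕ} (R : ℝ) (hR : 2 * R ≤ 1/4) (y : EE k) (hy : ‖y‖ ≤ R) (t : ℝ)
    (j j' : Fin m) (hne : j' ≠ j) (p : ENNReal)
    (hp : ∀ x : EE k, p ≤ unifCube k (Metric.closedBall x (3 * R))ᶜ) :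
    p ^ n * (ENNReal.ofReal (1/2) ^ k * (volume (GG y t) * p ^ m)) ≤
      PP k n m (EV k n R y t j j') := by
  unfold PP
  rw [Measure.prod_apply_symm (EV_meas k n R y t j j')]
  set T := {D : Fin m → EE k | D j ∈ KK k ∧
    ∀ l, l ≠ j → D l - D j ∈ if l = j' then GG y t else (Metric.closedBall 0 (2 * R))ᶜ} with hT
  have hTm : MeasurableSet T := by
    refine meas_and ?_ (forall_meas fun l => ?_)
    · exact (measurable_pi_apply j) (KK_meas k)
    · refine MeasurableSet.imp (MeasurableSet.const _) ?_
      have : MeasurableSet (if l = j' then GG y t else (Metric.closedBall (0 : EE k) (2 * R))ᶜ) := by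
        split_ifs
        · exact GG_meas y t
        · exact measurableSet_closedBall.compl
      exact (show Measurable fun D : (Fin m → EE k) => D l - D j by fun_prop) this
  calc _ ≤ p ^ n * (Measure.pi fun _ : Fin m => unifCube k) T := by
        gcongr; exact D_lb k R hR y hy t j j' hne p hp
    _ = ∫⁻ D, T.indicator (fun _ => p ^ n) D ∂(Measure.pi fun _ : Fin m => unifCube k) := by
        rw [lintegral_indicator_const hTm]
    _ ≤ _ := by
        apply lintegral_mono
        intro D
        by_cases hD : D ∈ T
        · rw [Set.indicator_of_mem hD]
          have hsub : Set.pi Set.univ (fun _ : Fin n => (Metric.closedBall (D j) (3 * R))ᶜ) ⊆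
              (fun S : Fin n → EE k => (S, D)) ⁻¹' EV k n R y t j j' := by
            intro S hS
            exact ⟨fun i => hS i (Set.mem_univ _), hD⟩
          refine le_trans ?_ (measure_mono hsub)
          rw [Measure.pi_pi]
          calc p ^ n = ∏ l : Fin n, p := by simp
            _ ≤ _ := Finset.prod_le_prod' fun i _ => hp (D j)
        · rw [Set.indicator_of_notMem hD]; exact zero_le

lemma EV_sub (k N n : ℕ) {m : ℕ} (r : Fin n → ℝ) (i : Fin n) (R : ℝ) (hR : 2 * R ≤ 1/4)
    (hr : ∀ i', (r i' / (N:ℝ)) ^ ((1:ℝ) / (k:ℝ)) ≤ R) (y : EE k) (hy : ‖y‖ ≤ R) (t : ℝ)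
    (ht : t ∈ Set.Icc (0:ℝ) 1) (j j' : Fin m) (hne : j' ≠ j) :
    EV k n R y t j j' ⊆ AA k N r i j (t • y) \ AA k N r i j y := by
  rintro ω ⟨h1, h2, h3⟩
  have hR0 : 0 ≤ R := (norm_nonneg _).trans hy
  have hty : ‖t • y‖ = t * ‖y‖ := by rw [norm_smul, Real.norm_of_nonneg ht.1]
  have hty1 : t * ‖y‖ ≤ ‖y‖ := mul_le_of_le_one_left (norm_nonneg _) ht.2
  have hj' := h3 j' hne
  rw [if_pos rfl] at hj'
  have hn := GG_norm hj'
  have hfj : Fr k N r i ω j := by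
    apply isFree_of_isolated
    rintro i' ⟨_, h⟩
    have := h1 i'
    simp only [Set.mem_compl_iff, Metric.mem_closedBall, not_le] at this
    have h' : dist (ω.1 i') (ω.2 j) ≤ R := le_trans h (hr i')
    linarith
  have hfj' : Fr k N r i ω j' := by
    apply isFree_of_isolated
    rintro i' ⟨_, h⟩
    have := h1 i'
    simp only [Set.mem_compl_iff, Metric.mem_closedBall, not_le] at this
    have h' : dist (ω.1 i') (ω.2 j') ≤ R := le_trans h (hr i')
    have h4 := dist_triangle (ω.1 i') (ω.2 j') (ω.2 j)
    rw [dist_eq_norm (ω.2 j')] at h4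
    linarith
  refine ⟨⟨KK_add h2 (by rw [hty]; linarith), hfj, ?_⟩, ?_⟩
  · intro l hl hlj
    have : dist (ω.2 j + t • y) (ω.2 j) < dist (ω.2 j + t • y) (ω.2 l) := by
      rw [dist_self_add_left, hty]
      by_cases hlj' : l = j'
      · subst hlj'
        have := hj'.2
        simp only [Metric.mem_closedBall, not_le] at this
        calc t * ‖y‖ < _ := this
          _ = _ := by
            rw [dist_eq_norm, dist_eq_norm, ← norm_neg]; congr 1; abel
      · have := h3 l hlj
        rw [if_neg hlj'] at this
        simp only [Set.mem_compl_iff, Metric.mem_closedBall, not_le, dist_zero_right] at this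
        have h5 : ‖ω.2 l - ω.2 j‖ ≤ ‖t • y‖ + dist (ω.2 j + t • y) (ω.2 l) := by
          rw [dist_eq_norm]
          have : ω.2 l - ω.2 j = t • y - (ω.2 j + t • y - ω.2 l) := by abel
          rw [this]; exact norm_sub_le _ _
        rw [hty] at h5
        linarith
    exact ⟨fun _ => this, fun _ => this.le⟩
  · rintro ⟨_, _, hw⟩
    have h5 := hw j' hfj' hne
    have h6 : dist (ω.2 j + y) (ω.2 j') < ‖y‖ := by
      have := hj'.1
      rw [mem_ball_iff_norm] at this
      rw [dist_eq_norm, ← norm_neg]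
      have e1 : -(ω.2 j + y - ω.2 j') = ω.2 j' - ω.2 j - y := by abel
      rw [e1]; exact this
    rw [dist_self_add_left] at h5
    rcases lt_or_gt_of_ne hne with h | h
    · linarith [h5.1 h]
    · linarith [h5.2 h]

lemma EV_disj (k n : ℕ) {m : ℕ} (R : ℝ) (y : EE k) (hy : ‖y‖ ≤ R) (t : ℝ)
    (j j' j'' : Fin m) (hne : j'' ≠ j) (hne' : j' ≠ j'') (hj : j' ≠ j) :
    Disjoint (EV k n R y t j j') (EV k n R y t j j'') := by
  rw [Set.disjoint_left]
  rintro ω h h'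
  have h1 := h.2.2 j'' hne
  have h2 := h'.2.2 j'' hne
  rw [if_neg (Ne.symm hne')] at h1
  rw [if_pos rfl] at h2
  have := GG_norm h2
  simp only [Set.mem_compl_iff, Metric.mem_closedBall, not_le, dist_zero_right] at h1
  linarith

lemma AA_mono (k N n : ℕ) {m : ℕ} (r : Fin n → ℝ) (i : Fin n) (y : EE k) (t : ℝ)
    (ht : t ∈ Set.Icc (0:ℝ) 1) (j : Fin m) (ω : (Fin n → EE k) × (Fin m → EE k))
    (hω : ω.2 j ∈ QQ k) (h : ω ∈ AA k N r i j y) : ω ∈ AA k N r i j (t • y) := by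
  obtain ⟨h1, h2, h3⟩ := h
  refine ⟨?_, h2, ?_⟩
  · intro a
    have ha := h1 a
    have hb := hω a
    simp only [PiLp.add_apply, PiLp.smul_apply, smul_eq_mul, Set.mem_Icc] at *
    obtain ⟨ha1, ha2⟩ := ha
    obtain ⟨hb1, hb2⟩ := hb
    obtain ⟨ht1, ht2⟩ := ht
    constructor <;> nlinarith
  · have hd : ∀ l, dist (ω.2 j + y) (ω.2 l) ≤ dist (ω.2 j + t • y) (ω.2 l) + (‖y‖ - t * ‖y‖) := by
      intro l
      have h4 := dist_triangle (ω.2 j + y) (ω.2 j + t • y) (ω.2 l)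
      have h5 : dist (ω.2 j + y) (ω.2 j + t • y) = ‖y‖ - t * ‖y‖ := by
        rw [dist_add_left, dist_eq_norm]
        have : y - t • y = (1 - t) • y := by rw [sub_smul, one_smul]
        rw [this, norm_smul, Real.norm_of_nonneg (by linarith [ht.2])]
        ring
      linarith
    have hty : ‖t • y‖ = t * ‖y‖ := by rw [norm_smul, Real.norm_of_nonneg ht.1]
    intro l hl hlj
    obtain ⟨h4, h5⟩ := h3 l hl hlj
    have := hd l
    rw [dist_self_add_left] at h4 h5 ⊢
    rw [hty]
    exact ⟨fun h => by linarith [h4 h], fun h => by linarith [h5 h]⟩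

lemma ae_QQ (k n : ℕ) {m : ℕ} (j : Fin m) : ∀ᵐ ω ∂(PP k n m), ω.2 j ∈ QQ k := by
  have h1 : MeasurePreserving (fun ω : (Fin n → EE k) × (Fin m → EE k) => ω.2 j)
      (PP k n m) (unifCube k) := by
    have a := measurePreserving_eval (fun _ : Fin m => unifCube k) j
    have b : MeasurePreserving Prod.snd (PP k n m) (Measure.pi fun _ : Fin m => unifCube k) := by
      unfold PP; exact measurePreserving_snd
    exact a.comp b
  have h2 : ∀ᵐ x ∂(unifCube k), x ∈ QQ k := by
    rw [unifCube_eq]; exact ae_restrict_mem (QQ_meas k)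
  exact h1.quasiMeasurePreserving.ae h2

lemma PHI_super (k N n m : ℕ) (hk : 0 < k) (r : Fin n → ℝ) (i : Fin n) (R : ℝ) (hR : 2 * R ≤ 1/4)
    (hr : ∀ i', (r i' / (N:ℝ)) ^ ((1:ℝ) / (k:ℝ)) ≤ R) (p : ℝ) (hp0 : 0 ≤ p)
    (hp : ∀ x : EE k, ENNReal.ofReal p ≤ unifCube k (Metric.closedBall x (3 * R))ᶜ)
    (y : EE k) (hy : ‖y‖ ≤ R) (t : ℝ) (ht : t ∈ Set.Icc (0:ℝ) 1) :
    PHI k N m r i y + m * (m - 1) * (p ^ n * ((1/2)^k * (p ^ m *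
      volume.real (Metric.ball (0 : EE k) 1)))) * (‖y‖ ^ k - (t * ‖y‖) ^ k)
      ≤ PHI k N m r i (t • y) := by
  set e := (p ^ n * ((1/2)^k * (p ^ m * volume.real (Metric.ball (0 : EE k) 1))))
    * (‖y‖ ^ k - (t * ‖y‖) ^ k) with he
  have hE : ∀ j j' : Fin m, j' ≠ j → e ≤ (PP k n m).real (EV k n R y t j j') := by
    intro j j' hne
    have h1 := EV_lb k n R hR y hy t j j' hne _ hp
    have h2 := ENNReal.toReal_mono (measure_ne_top _ _) h1
    simp only [ENNReal.toReal_mul, ENNReal.toReal_pow, ENNReal.toReal_ofReal hp0] at h2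
    rw [ENNReal.toReal_ofReal (by norm_num)] at h2
    refine le_trans ?_ h2
    have h3 := GG_vol hk y t ht.1
    calc e = p ^ n * ((1/2)^k * ((volume.real (Metric.ball (0 : EE k) 1) *
          (‖y‖ ^ k - (t * ‖y‖) ^ k)) * p ^ m)) := by rw [he]; ring
      _ ≤ p ^ n * ((1/2)^k * (volume.real (GG y t) * p ^ m)) := by gcongr
  have hj : ∀ j : Fin m, (PP k n m).real (AA k N r i j y) + (m - 1) * e ≤
      (PP k n m).real (AA k N r i j (t • y)) := by
    intro j
    have hU : (PP k n m).real (⋃ j' ∈ Finset.univ.erase j, EV k n R y t j j') =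
        ∑ j' ∈ Finset.univ.erase j, (PP k n m).real (EV k n R y t j j') := by
      apply measureReal_biUnion_finset
      · intro a ha b hb hab
        simp only [Finset.coe_erase, Set.mem_sdiff, Set.mem_singleton_iff] at ha hb
        exact EV_disj k n R y hy t j a b hb.2 hab ha.2
      · intro a _; exact EV_meas k n R y t j a
      · intro a _; exact measure_ne_top _ _
    have hd : Disjoint (AA k N r i j y) (⋃ j' ∈ Finset.univ.erase j, EV k n R y t j j') := by
      rw [Set.disjoint_left]
      intro ω h h'
      simp only [Set.mem_iUnion] at h'
      obtain ⟨j', hj', h'⟩ := h'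
      exact (EV_sub k N n r i R hR hr y hy t ht j j' (Finset.ne_of_mem_erase hj') h').2 h
    have hU2 : (m - 1) * e ≤ (PP k n m).real (⋃ j' ∈ Finset.univ.erase j, EV k n R y t j j') := by
      rw [hU]
      have : ((m:ℝ) - 1) * e = ∑ j' ∈ Finset.univ.erase j, e := by
        rw [Finset.sum_const, Finset.card_erase_of_mem (Finset.mem_univ j)]
        have : 1 ≤ m := by have := j.2; omega
        simp [this]
      rw [this]
      exact Finset.sum_le_sum fun j' hj' => hE j j' (Finset.ne_of_mem_erase hj')
    have hm : MeasurableSet (⋃ j' ∈ Finset.univ.erase j, EV k n R y t j j') :=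
      Finset.measurableSet_biUnion _ fun a _ => EV_meas k n R y t j a
    calc _ ≤ (PP k n m).real (AA k N r i j y) +
          (PP k n m).real (⋃ j' ∈ Finset.univ.erase j, EV k n R y t j j') := by linarith
      _ = (PP k n m).real (AA k N r i j y ∪ (⋃ j' ∈ Finset.univ.erase j, EV k n R y t j j')) :=
          (measureReal_union hd hm (measure_ne_top _ _) (measure_ne_top _ _)).symm
      _ ≤ _ := by
        apply ENNReal.toReal_mono (measure_ne_top _ _)
        apply measure_mono_ae
        filter_upwards [ae_QQ k n j] with ω hω h
        rcases h with h | h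
        · exact AA_mono k N n r i y t ht j ω hω h
        · have h' : ω ∈ (⋃ j' ∈ Finset.univ.erase j, EV k n R y t j j') := h
          simp only [Set.mem_iUnion] at h'
          obtain ⟨j', hj', h'⟩ := h'
          exact (EV_sub k N n r i R hR hr y hy t ht j j' (Finset.ne_of_mem_erase hj') h').1
  unfold PHI
  calc _ = ∑ j : Fin m, ((PP k n m).real (AA k N r i j y) + (m - 1) * e) := by
        rw [Finset.sum_add_distrib]; simp [he]; ring
    _ ≤ _ := Finset.sum_le_sum fun j _ => hj j

lemma exp_le_one_sub (x : ℝ) (h0 : 0 ≤ x) (h1 : x ≤ 1/2) : Real.exp (-(2 * x)) ≤ 1 - x := by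
  rw [Real.exp_neg]
  have h2 := Real.add_one_le_exp (2 * x)
  have h3 : (Real.exp (2 * x))⁻¹ ≤ (2 * x + 1)⁻¹ := inv_anti₀ (by linarith) h2
  refine h3.trans ?_
  rw [inv_le_iff_one_le_mul₀ (by linarith)]
  nlinarith

lemma row_conc (k : ℕ) (hk : 0 < k) (M β : ℝ) (hM : 1 ≤ M) (hβ : 0 < β) :
    ∃ N : ℕ, ∃ c : ℝ, 0 < c ∧ ∀ n : ℕ, N ≤ n → ∀ m : ℕ, (m : ℝ) = β * n →
      ∀ a : Fin n → ℝ, (∀ i, a i ∈ Set.Icc (0:ℝ) M) → ∀ i, ∃ ψ : ℝ → ℝ,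
        AntitoneOn ψ (Set.Icc 0 M) ∧ ∀ u ∈ Set.Icc (0:ℝ) M, ∀ v ∈ Set.Icc (0:ℝ) M,
          muU k n m (Function.update a i u) - muU k n m (Function.update a i v) ≤
            ψ v * (u - v) - c * (u - v)^2 := by
  have hne : Nonempty (Fin k) := ⟨⟨0, hk⟩⟩
  have hdim : Module.finrank ℝ (EE k) = k := by simp
  set ck := volume.real (Metric.ball (0 : EE k) 1) with hck
  have hck0 : 0 < ck := by
    rw [hck, measureReal_def]
    exact ENNReal.toReal_pos (Metric.measure_ball_pos _ _ one_pos).ne' measure_ball_lt_top.ne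
  set q := ck * 3 ^ k * M with hq
  have hq0 : 0 < q := by positivity
  set c0 := Real.exp (-(2 * q)) * ((1/2)^k * (Real.exp (-(2 * q * β)) * ck)) with hc0
  have hc0p : 0 < c0 := by positivity
  obtain ⟨N1, hN1⟩ := exists_nat_ge (2 * q)
  obtain ⟨N2, hN2⟩ := exists_nat_ge (2 / β)
  obtain ⟨N3, hN3⟩ := exists_nat_ge (M * 8 ^ k)
  refine ⟨N1 + N2 + N3 + 1, β^2 * c0 * ck / 4, by positivity, ?_⟩
  intro n hn m hm a ha i
  have hnr : (N1:ℝ) + N2 + N3 + 1 ≤ n := by exact_mod_cast hn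
  have hN1' : (0:ℝ) ≤ N1 := by positivity
  have hN2' : (0:ℝ) ≤ N2 := by positivity
  have hN3' : (0:ℝ) ≤ N3 := by positivity
  have hn0 : (0:ℝ) < n := by linarith
  have hkne : (k:ℝ) ≠ 0 := by positivity
  let ρ : ℝ → ℝ := fun v => (v / (n:ℝ)) ^ ((1:ℝ) / (k:ℝ))
  have hρ0 : ∀ v, 0 ≤ v → 0 ≤ ρ v := fun v hv => by positivity
  have hρk : ∀ v, 0 ≤ v → ρ v ^ k = v / n := by
    intro v hv
    simp only [ρ, one_div]
    exact Real.rpow_inv_natCast_pow (by positivity) hk.ne'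
  have hρm : ∀ u v, 0 ≤ u → u ≤ v → ρ u ≤ ρ v := by
    intro u v hu huv
    apply Real.rpow_le_rpow (by positivity) (by gcongr) (by positivity)
  set R := ρ M with hR
  have hM0 : 0 ≤ M := by linarith
  have hR0 : 0 ≤ R := hρ0 M hM0
  have hRk : R ^ k = M / n := hρk M hM0
  have hR8 : 2 * R ≤ 1/4 := by
    have : R ^ k ≤ (1/8) ^ k := by
      rw [hRk, div_pow, one_pow, div_le_div_iff₀ hn0 (by positivity)]
      linarith
    have := (pow_le_pow_iff_left₀ hR0 (by norm_num) hk.ne').1 this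
    linarith
  set p := 1 - q / n with hp
  have hqn : q / n ≤ 1/2 := by
    rw [div_le_iff₀ hn0]; linarith
  have hqn0 : 0 ≤ q / n := by positivity
  have hp0 : 0 ≤ p := by linarith
  have hpu : ∀ x : EE k, ENNReal.ofReal p ≤ unifCube k (Metric.closedBall x (3 * R))ᶜ := by
    intro x
    rw [prob_compl_eq_one_sub measurableSet_closedBall, hp, ENNReal.ofReal_sub _ hqn0,
      ENNReal.ofReal_one]
    apply tsub_le_tsub_left
    calc unifCube k (Metric.closedBall x (3 * R)) ≤ volume (Metric.closedBall x (3 * R)) := by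
          rw [unifCube_eq]; exact Measure.restrict_apply_le _ _
      _ = ENNReal.ofReal (volume.real (Metric.closedBall x (3 * R))) := by
          rw [measureReal_def, ENNReal.ofReal_toReal measure_closedBall_lt_top.ne]
      _ = ENNReal.ofReal (q / n) := by
          rw [Measure.addHaar_real_closedBall _ _ (by positivity), hdim, mul_pow, hRk, hq]
          congr 1
          ring
  have hpn : Real.exp (-(2 * q)) ≤ p ^ n := by
    have h := exp_le_one_sub (q / n) hqn0 hqn
    calc Real.exp (-(2 * q)) = Real.exp (-(2 * (q / n))) ^ n := by
          rw [← Real.exp_nat_mul]; congr 1; field_simp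
      _ ≤ _ := by gcongr
  have hpm : Real.exp (-(2 * q * β)) ≤ p ^ m := by
    have h := exp_le_one_sub (q / n) hqn0 hqn
    calc Real.exp (-(2 * q * β)) = Real.exp (-(2 * (q / n))) ^ m := by
          rw [← Real.exp_nat_mul, hm]; congr 1; field_simp
      _ ≤ _ := by gcongr
  have hm2 : (2:ℝ) ≤ m := by
    rw [hm]
    have : 2 / β ≤ n := by linarith
    rw [div_le_iff₀ hβ] at this
    linarith
  set c' := (m:ℝ) * (m - 1) * (p ^ n * ((1/2)^k * (p ^ m * ck))) with hc'
  have hcc : (m:ℝ)^2 / 2 * c0 ≤ c' := by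
    rw [hc', hc0]
    have : (m:ℝ)^2/2 ≤ m * (m - 1) := by nlinarith
    have h0 : (0:ℝ) ≤ m * (m - 1) := le_trans (by positivity) this
    gcongr
  have hc'0 : 0 ≤ c' := le_trans (by positivity) hcc
  obtain ⟨Ψ, hΨ1, hΨ2⟩ := polar_super hk (PHI k n m a i) (PHI_meas k n m a i) m
    (PHI_bdd k n m a i) c' R (fun y hy t ht => PHI_super k n n m hk a i R hR8
      (fun i' => hρm _ _ (ha i').1 (ha i').2) p hp0 hpu y hy t ht)
  refine ⟨fun v => Ψ (ρ v) / n, ?_, ?_⟩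
  · intro u hu v hv huv
    have := hΨ1 hc'0 ⟨hρ0 u hu.1, hρm _ _ hu.1 hu.2⟩ ⟨hρ0 v hv.1, hρm _ _ hv.1 hv.2⟩
      (hρm u v hu.1 huv)
    simp only
    gcongr
  · intro u hu v hv
    have := hΨ2 (ρ u) ⟨hρ0 u hu.1, hρm _ _ hu.1 hu.2⟩ (ρ v) ⟨hρ0 v hv.1, hρm _ _ hv.1 hv.2⟩
    rw [row_rep, row_rep, add_sub_add_left_eq_sub]
    refine this.trans ?_
    rw [hρk u hu.1, hρk v hv.1, ← hck]
    have e1 : Ψ (ρ v) * (u / n - v / n) = Ψ (ρ v) / n * (u - v) := by ring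
    have e2 : c' * ck / 2 * (u / n - v / n)^2 = (c' / n^2) * ck / 2 * (u - v)^2 := by
      field_simp
    have e3 : β^2 * c0 / 2 ≤ c' / n^2 := by
      rw [le_div_iff₀ (by positivity)]
      refine le_trans (le_of_eq ?_) hcc
      rw [hm]; ring
    rw [e1, e2]
    have e4 : β^2 * c0 * ck / 4 * (u-v)^2 ≤ (c' / n^2) * ck / 2 * (u - v)^2 := by
      calc β^2 * c0 * ck / 4 * (u-v)^2 = (β^2 * c0 / 2) * ck / 2 * (u-v)^2 := by ring
        _ ≤ _ := by gcongr
    linarith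

lemma descSort_anti {n : ℕ} (x : Fin n → ℝ) : Antitone (descSort x) := by
  intro i j hij
  have := Tuple.monotone_sort (fun i => -x i) hij
  simp only [Function.comp] at this
  simp only [descSort, Function.comp]
  linarith

theorem main_thm (k : ℕ) (hk : 2 ≤ k) (M : ℝ) (hM1 : 1 ≤ M) :
    ∃ B w : ℝ, 0 < B ∧ 0 < w ∧
      ∀ β : ℝ, 0 < β → max 1 β⁻¹ ≤ M →
        ∃ N : ℕ, ∃ α : ℝ, 0 < α ∧
          ∀ n : ℕ, N ≤ n → ∀ m : ℕ, (m : ℝ) = β * n →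
            ∀ θ : ℝ, 0 < θ →
              ∀ r r' : Fin n → ℝ,
                (∀ i, r i ∈ Set.Icc (0 : ℝ) M) → (∀ i, r' i ∈ Set.Icc (0 : ℝ) M) →
                Majorizes r r' →
                θ * n < ∑ i, |descSort r i - descSort r' i| →
                α * θ ^ 4 * n - B * (min (α * θ ^ 4 / 3) w) ^ (-(k : ℤ)) <
                  muU k n m r' - muU k n m r := by
  refine ⟨5, 1, by norm_num, one_pos, ?_⟩
  intro β hβ _
  obtain ⟨N, c, hc, hrow⟩ := row_conc k (by omega) M β hM1 hβ
  have hM0 : 0 < M := by linarith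
  refine ⟨N, min (3 / M^4) (3 * c / (7 * M^2)), lt_min (by positivity) (by positivity), ?_⟩
  set α := min (3 / M^4) (3 * c / (7 * M^2)) with hα
  have hα0 : 0 < α := lt_min (by positivity) (by positivity)
  have hα1 : α * M^4 ≤ 3 := by
    have : α ≤ 3 / M^4 := min_le_left _ _
    rwa [le_div_iff₀ (by positivity)] at this
  have hα2 : α * (7 * M^2) ≤ 3 * c := by
    have : α ≤ 3 * c / (7 * M^2) := min_le_right _ _
    rwa [le_div_iff₀ (by positivity)] at this
  intro n hn m hm θ hθ r r' hr hr' hmaj hd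
  set x := descSort r with hx
  set y := descSort r' with hy
  have hxI : ∀ i, x i ∈ Set.Icc 0 M := fun i => hr _
  have hyI : ∀ i, y i ∈ Set.Icc 0 M := fun i => hr' _
  have hn0 : 0 < n := by
    rcases Nat.eq_zero_or_pos n with h | h
    · subst h; simp at hd
    · exact h
  have hnr : (0:ℝ) < n := by exact_mod_cast hn0
  have hθM : θ ≤ M := by
    have h1 : ∑ i, |x i - y i| ≤ n * M := by
      calc _ ≤ ∑ i : Fin n, M := by
            apply Finset.sum_le_sum
            intro i _
            have h1 := hxI i
            have h2 := hyI i
            rw [abs_le]; constructor <;> linarith [h1.1, h1.2, h2.1, h2.2]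
        _ = _ := by simp
    have h2 : θ * n < M * n := by linarith
    exact (lt_of_mul_lt_mul_right h2 hnr.le).le
  set e := α * θ^4 / 3 with he
  have he0 : 0 < e := by positivity
  have he1 : e ≤ 1 := by
    have : α * θ^4 ≤ α * M^4 := by gcongr
    rw [he]; linarith
  have he7 : 7 * e ≤ c * θ^2 := by
    have h1 : θ^2 ≤ M^2 := by gcongr
    have h2 : α * (7 * θ^2) ≤ 3 * c := le_trans (by gcongr) hα2
    have h3 : α * (7 * θ^2) * θ^2 ≤ 3 * c * θ^2 := by gcongr
    rw [he]; nlinarith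
  have hint := interp M (c * θ^2) (fun a => muU k n m a) x y hxI hyI (by
    intro a ha i
    obtain ⟨ψ, hψ1, hψ2⟩ := hrow n hn m hm a ha i
    refine karamata M c θ hc.le hθ.le x y hxI hyI (descSort_anti r') hmaj.1 ?_ hd.le
      (fun v => muU k n m (Function.update a i v)) ψ hψ1 hψ2
    have h1 : ∑ i, x i = ∑ i, r i := Equiv.sum_comp (Tuple.sort fun i => -r i) r
    have h2 : ∑ i, y i = ∑ i, r' i := Equiv.sum_comp (Tuple.sort fun i => -r' i) r'
    rw [h1, h2]; exact hmaj.2)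
  have hsx := sampling k n m hn0 hn0 x (descSort_anti r) (fun i => (hxI i).1) e he0 he1
  have hsy := sampling k n m hn0 hn0 y (descSort_anti r') (fun i => (hyI i).1) e he0 he1
  have hmx : muU k n m x = muU k n m r := muU_perm k n m r _
  have hmy : muU k n m y = muU k n m r' := muU_perm k n m r' _
  rw [hmx] at hsx
  rw [hmy] at hsy
  have hsx' := (abs_le.1 hsx).1
  have hsy' := (abs_le.1 hsy).2
  have hnn : (0:ℝ) < (n:ℝ)^n := by positivity
  have hfin : c * θ^2 * n - 4 * e * n - 4 * e⁻¹^2 ≤ muU k n m r' - muU k n m r := by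
    apply le_of_mul_le_mul_left _ hnn
    nlinarith
  rw [min_eq_left he1, zpow_neg, zpow_natCast, ← inv_pow]
  have h1e : 1 ≤ e⁻¹ := (one_le_inv₀ he0).2 he1
  have hpow : e⁻¹^2 ≤ e⁻¹^k := pow_le_pow_right₀ h1e hk
  have hpos : 0 < e⁻¹^k := by positivity
  have h3 : α * θ^4 = 3 * e := by rw [he]; ring
  rw [h3]
  have : 7 * e * n ≤ c * θ^2 * n := by gcongr
  linarith

/-- **Quantitative Schur-concavity in dimension `k ≥ 2`.**
Fix `k ≥ 2` and `M ≥ 1`. There exist positive constants `B`, `w` depending only on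
`(k, M)` such that for any demand-to-supply ratio `β > 0` with `M ≥ max {1, 1/β}`,
there exist a positive constant `α` and an integer `N` (depending only on `(k, β, M)`)
such that for any `θ > 0` and any `r, r' ∈ [0,M]^n` with `r ⪰ r'` and
`‖r^↓ - r'^↓‖₁ > θ n`, and all `n ≥ N` with `m = βn`:
`μ_m(r') - μ_m(r) > α θ⁴ n - B (min {α θ⁴/3, w})^{-k}`. -/
theorem quantitative_schur_concavity_high_dim (k : ℕ) (hk : 2 ≤ k) (M : ℝ) (hM1 : 1 ≤ M) :
    ∃ B w : ℝ, 0 < B ∧ 0 < w ∧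
      ∀ β : ℝ, 0 < β → max 1 β⁻¹ ≤ M →
        ∃ N : ℕ, ∃ α : ℝ, 0 < α ∧
          ∀ n : ℕ, N ≤ n → ∀ m : ℕ, (m : ℝ) = β * n →
            ∀ θ : ℝ, 0 < θ →
              ∀ r r' : Fin n → ℝ,
                (∀ i, r i ∈ Set.Icc (0 : ℝ) M) → (∀ i, r' i ∈ Set.Icc (0 : ℝ) M) →
                Majorizes r r' →
                θ * n < ∑ i, |descSort r i - descSort r' i| →
                α * θ ^ 4 * n - B * (min (α * θ ^ 4 / 3) w) ^ (-(k : ℤ)) <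
                  muU k n m r' - muU k n m r := by
  exact main_thm k hk M hM1

end
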